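/- arXiv:1702.06859 — 2 statements merged into one kernel-verified Lean document; each statement's English description precedes it below -/
import Mathlib

section
/- Let T > 0, let b : ℝ → ℝ be Lipschitz continuous, let σ and σ̃ belong to the class M with σ(x) > 0 and σ̃(x) > 0 for all x, and let f : ℝ → ℝ be of class C² with f''(x) ≠ 0 for all x ∈ ℝ. Let u be a classical solution of the parabolic equation associated with (b, σ, f) and let ũ be a classical solution of the parabolic equation associated with (b, σ̃, f). If there exist ε ∈ (0, T) and a nonempty open set ω ⊂ ℝ such that u(t,x) = ũ(t,x) for all t ∈ (0, ε) and all x ∈ ω, then σ(x) = σ̃(x) for all x ∈ ℝ. -/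
open Set Filter

/-- A function `ψ : ℝ → ℝ` is piecewise analytic if there exist `δ > 0`, a strictly
increasing sequence `(κ j)_{j ∈ ℤ}` tending to `-∞` at `-∞` and `+∞` at `+∞` with
`κ (j+1) - κ j > δ`, and functions `φ j` analytic on `[κ j, κ (j+1)]`, such that
`ψ = φ j` on `[κ j, κ (j+1))`. -/
def PiecewiseAnalytic (ψ : ℝ → ℝ) : Prop :=
  ∃ (δ : ℝ) (κ : ℤ → ℝ) (φ : ℤ → ℝ → ℝ),
    0 < δ ∧ StrictMono κ ∧
    Tendsto κ atBot atBot ∧ Tendsto κ atTop atTop ∧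
    (∀ j : ℤ, δ < κ (j + 1) - κ j) ∧
    (∀ j : ℤ, AnalyticOn ℝ (φ j) (Icc (κ j) (κ (j + 1)))) ∧
    (∀ j : ℤ, ∀ x ∈ Ico (κ j) (κ (j + 1)), ψ x = φ j x)

/-- The class `M` of Lipschitz-continuous, piecewise analytic functions on `ℝ`. -/
def ClassM (ψ : ℝ → ℝ) : Prop :=
  (∃ K, LipschitzWith K ψ) ∧ PiecewiseAnalytic ψ

/-- `u : [0,T) × ℝ → ℝ` is a classical solution of
`∂ₜ u = (1/2) σ(x)² ∂ₓₓ u + b(x) ∂ₓ u`, `u(0, ·) = f`: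
`u`, `∂ₜ u`, `∂ₓ u`, `∂ₓₓ u` exist and are continuous on `[0,T) × ℝ`, the PDE holds
there, and the initial condition holds. -/
def IsClassicalSolution (T : ℝ) (b σ f : ℝ → ℝ) (u : ℝ → ℝ → ℝ) : Prop :=
  ContinuousOn (fun p : ℝ × ℝ => u p.1 p.2) (Ico 0 T ×ˢ univ) ∧
  (∀ t ∈ Ico 0 T, ∀ x : ℝ, DifferentiableAt ℝ (fun s => u s x) t) ∧
  (∀ t ∈ Ico 0 T, ∀ x : ℝ, DifferentiableAt ℝ (fun y => u t y) x) ∧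
  (∀ t ∈ Ico 0 T, ∀ x : ℝ, DifferentiableAt ℝ (deriv (fun y => u t y)) x) ∧
  ContinuousOn (fun p : ℝ × ℝ => deriv (fun s => u s p.2) p.1) (Ico 0 T ×ˢ univ) ∧
  ContinuousOn (fun p : ℝ × ℝ => deriv (fun y => u p.1 y) p.2) (Ico 0 T ×ˢ univ) ∧
  ContinuousOn (fun p : ℝ × ℝ => deriv (deriv (fun y => u p.1 y)) p.2) (Ico 0 T ×ˢ univ) ∧
  (∀ t ∈ Ico 0 T, ∀ x : ℝ,
    deriv (fun s => u s x) t =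
      (1 / 2) * (σ x) ^ 2 * deriv (deriv (fun y => u t y)) x
        + b x * deriv (fun y => u t y) x) ∧
  (∀ x : ℝ, u 0 x = f x)


lemma cmp_aux {Q R Rd A B : ℝ → ℝ} {p q β : ℝ}
    (hR : ∀ x ∈ Icc p q, HasDerivAt R (Rd x) x)
    (hA : ∀ x ∈ Icc p q, 0 ≤ A x) (hB : ∀ x ∈ Icc p q, |B x| ≤ β)
    (hle : ∀ x ∈ Icc p q, Rd x ≤ A x * Q x - B x * R x)
    (hRp : R p < 0)
    (hQn : ∀ x ∈ Ico p q, Q x ≤ 0) :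
    ∀ x ∈ Icc p q, R x < 0 := by
  intro x hx
  have key := image_le_of_deriv_right_lt_deriv_boundary (f := R) (f' := Rd) (a := p) (b := q)
    (B := fun x => R p * Real.exp (-(β + 1) * (x - p)))
    (B' := fun x => R p * (Real.exp (-(β + 1) * (x - p)) * (-(β + 1))))
    (fun x hx => (hR x hx).continuousAt.continuousWithinAt)
    (fun x hx => (hR x (Ico_subset_Icc_self hx)).hasDerivWithinAt) (by simp)
    (fun x => by
      have h1 : HasDerivAt (fun x : ℝ => -(β + 1) * (x - p)) (-(β + 1)) x := by
        simpa using ((hasDerivAt_id x).sub_const p).const_mul (-(β + 1))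
      exact (h1.exp).const_mul (R p))
    (by
      intro x hx he
      have hx' := Ico_subset_Icc_self hx
      have h1 := hle x hx'
      have h2 := hQn x hx
      have h3 := hA x hx'
      have h4 := abs_le.1 (hB x hx')
      have h5 : A x * Q x ≤ 0 := mul_nonpos_of_nonneg_of_nonpos h3 h2
      have h6 : R x < 0 := by
        rw [he]; exact mul_neg_of_neg_of_pos hRp (Real.exp_pos _)
      have h7 : R p * (Real.exp (-(β + 1) * (x - p)) * (-(β + 1))) = -(β+1) * R x := by
        rw [he]; ring
      rw [h7]
      nlinarith)
    hx
  exact lt_of_le_of_lt key (mul_neg_of_neg_of_pos hRp (Real.exp_pos _))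

lemma sys_cmp {Q R Rd A B : ℝ → ℝ} {p q β : ℝ} 
    (hQ : ∀ x ∈ Icc p q, HasDerivAt Q (R x) x)
    (hR : ∀ x ∈ Icc p q, HasDerivAt R (Rd x) x)
    (hA : ∀ x ∈ Icc p q, 0 ≤ A x) (hB : ∀ x ∈ Icc p q, |B x| ≤ β)
    (hle : ∀ x ∈ Icc p q, Rd x ≤ A x * Q x - B x * R x)
    (hQp : Q p < 0) (hRp : R p < 0) :
    ∀ x ∈ Icc p q, Q x < 0 ∧ R x < 0 := by
  have hQneg : ∀ x ∈ Icc p q, Q x < 0 := by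
    by_contra! hcon
    obtain ⟨y, hy, hQy⟩ := hcon
    set S := {x | x ∈ Icc p q ∧ 0 ≤ Q x} with hS
    have hcl : IsClosed S := by
      have : ContinuousOn Q (Icc p q) := fun x hx => (hQ x hx).continuousAt.continuousWithinAt
      exact this.preimage_isClosed_of_isClosed isClosed_Icc isClosed_Ici
    have hbd : BddBelow S := ⟨p, fun x hx => hx.1.1⟩
    have hmem := hcl.csInf_mem ⟨y, hy, hQy⟩ hbd
    set z := sInf S
    have hneg : ∀ x ∈ Ico p z, Q x ≤ 0 := by
      intro x hx
      by_contra! h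
      exact absurd (csInf_le hbd (show x ∈ S from ⟨⟨hx.1, hx.2.le.trans hmem.1.2⟩, h.le⟩)) (not_le.2 hx.2)
    have hsub : Icc p z ⊆ Icc p q := Icc_subset_Icc_right hmem.1.2
    have hRn := cmp_aux (fun x hx => hR x (hsub hx))
      (fun x hx => hA x (hsub hx)) (fun x hx => hB x (hsub hx)) (fun x hx => hle x (hsub hx))
      hRp hneg
    have hanti : AntitoneOn Q (Icc p z) := by
      apply antitoneOn_of_deriv_nonpos (convex_Icc p z)
      · exact fun x hx => (hQ x (hsub hx)).continuousAt.continuousWithinAt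
      · exact fun x hx => (hQ x (hsub (interior_subset hx))).differentiableAt.differentiableWithinAt
      · intro x hx
        rw [(hQ x (hsub (interior_subset hx))).deriv]
        exact (hRn x (interior_subset hx)).le
    have := hanti (left_mem_Icc.2 hmem.1.1) (right_mem_Icc.2 hmem.1.1) hmem.1.1
    have := hmem.2
    linarith
  intro x hx
  exact ⟨hQneg x hx, cmp_aux hR hA hB hle hRp
    (fun x hx => (hQneg x (Ico_subset_Icc_self hx)).le) x hx⟩

lemma ode_bound {W W1 W2 α b h G : ℝ → ℝ} {p m d ε μ α0 α1 β H γ κ k: ℝ}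
    (hpm : p ≤ m) (hmd : m ≤ d) (hμ : 1 ≤ μ) (hα0 : 0 < α0) (hH : 0 < H)
    (hk : k = α1 * (2 + β) + 1)
    (hβ : 0 ≤ β) (hκ : 0 ≤ κ)
    (hW : ∀ x ∈ Icc p d, HasDerivAt W (W1 x) x)
    (hW1 : ∀ x ∈ Icc p d, HasDerivAt W1 (W2 x) x)
    (hode : ∀ x ∈ Icc p d, W2 x = α x * (μ^2 * W x - b x * W1 x + Real.exp (-(μ^2*ε)) * h x - G x))
    (hα : ∀ x ∈ Icc p d, α0 ≤ α x ∧ α x ≤ α1)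
    (hb : ∀ x ∈ Icc p d, |b x| ≤ β)
    (hh : ∀ x ∈ Icc p d, |h x| ≤ H)
    (hG : ∀ x ∈ Icc p d, 0 ≤ G x)
    (hGm : ∀ x ∈ Icc m d, γ ≤ G x)
    (hκγ : κ * (2 + 2 * α1 * β * (d - m)) ≤ α0 * γ)
    (hW0 : W p = 0) (hW10 : W1 p = 0) :
    W d < H * Real.exp (-(μ^2*ε)) * Real.exp (k * μ * (d - p)) - κ * (d - m)^2 := by
  have hpp : p ∈ Icc p d := ⟨le_rfl, hpm.trans hmd⟩
  have hα1 : 0 < α1 := lt_of_lt_of_le hα0 ((hα p hpp).1.trans (hα p hpp).2)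
  have hk1 : 1 ≤ k := by rw [hk]; nlinarith [mul_nonneg hα1.le hβ]
  set E := H * Real.exp (-(μ^2*ε)) with hE
  have hEpos : 0 < E := by positivity
  set Y : ℝ → ℝ := fun x => E * Real.exp (k * μ * (x - p)) with hY
  have hYd : ∀ x, HasDerivAt Y (k * μ * Y x) x := by
    intro x
    have h1 : HasDerivAt (fun x : ℝ => k * μ * (x - p)) (k * μ) x := by
      simpa using ((hasDerivAt_id x).sub_const p).const_mul (k * μ)
    have := h1.exp.const_mul E
    refine this.congr_deriv ?_
    change _ = k * μ * (E * Real.exp (k * μ * (x - p)))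
    ring
  have hYE : ∀ x ∈ Icc p d, E ≤ Y x := by
    intro x hx
    have : 1 ≤ Real.exp (k * μ * (x - p)) := by
      apply Real.one_le_exp
      have := sub_nonneg.2 hx.1
      positivity
    simp only [hY]; nlinarith
  have hkk : ∀ x ∈ Icc p d, α x * (μ^2 * Y x - b x * (k * μ * Y x) + Real.exp (-(μ^2*ε)) * h x)
      ≤ k * μ * (k * μ * Y x) := by
    intro x hx
    have hYp : 0 < Y x := lt_of_lt_of_le hEpos (hYE x hx)
    have e1 : Real.exp (-(μ^2*ε)) * h x ≤ μ^2 * k * Y x := by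
      have : Real.exp (-(μ^2*ε)) * h x ≤ E := by
        rw [hE, mul_comm H]
        exact mul_le_mul_of_nonneg_left ((le_abs_self _).trans (hh x hx)) (Real.exp_pos _).le
      have h2 : 1 ≤ μ^2 * k := by nlinarith [one_le_pow₀ hμ (n := 2)]
      nlinarith [hYE x hx]
    have e2 : - b x * (k * μ * Y x) ≤ β * (k * μ^2 * Y x) := by
      have h1 : - b x ≤ β := (neg_le_abs _).trans (hb x hx)
      have h2 : 0 ≤ k * μ * Y x := by positivity
      have h3 : k * μ * Y x ≤ k * μ^2 * Y x := by
        have : μ ≤ μ^2 := by nlinarith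
        gcongr
      calc - b x * (k * μ * Y x) ≤ β * (k * μ * Y x) := by gcongr
        _ ≤ _ := by gcongr
    have e3 : μ^2 * Y x ≤ μ^2 * k * Y x := by
      have : μ^2 * 1 * Y x ≤ μ^2 * k * Y x := by gcongr
      linarith
    have e4 : μ^2 * Y x - b x * (k * μ * Y x) + Real.exp (-(μ^2*ε)) * h x ≤ (2 + β) * (k * μ^2 * Y x) := by
      linarith
    have hαx := hα x hx
    have hax : 0 ≤ α x := hα0.le.trans hαx.1
    calc _ ≤ α x * ((2 + β) * (k * μ^2 * Y x)) := by gcongr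
      _ ≤ α1 * ((2 + β) * (k * μ^2 * Y x)) := by
        have : 0 ≤ (2 + β) * (k * μ^2 * Y x) := by positivity
        exact mul_le_mul_of_nonneg_right hαx.2 this
      _ = (k - 1) * (k * μ^2 * Y x) := by rw [hk]; ring
      _ ≤ _ := by
        have : 0 ≤ k * μ^2 * Y x := by positivity
        nlinarith
  have hB : ∀ x ∈ Icc p d, |α x * b x| ≤ α1 * β := by
    intro x hx
    have hαx := hα x hx
    have hax : 0 ≤ α x := hα0.le.trans hαx.1
    rw [abs_mul, abs_of_nonneg hax]
    exact mul_le_mul hαx.2 (hb x hx) (abs_nonneg _) hα1.le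
  -- phase one
  have ph1 := sys_cmp (Q := fun x => W x - Y x) (R := fun x => W1 x - k * μ * Y x)
    (Rd := fun x => W2 x - k * μ * (k * μ * Y x)) (A := fun x => α x * μ^2)
    (B := fun x => α x * b x) (p := p) (q := m) (β := α1 * β)
    (fun x hx => (hW x ⟨hx.1, hx.2.trans hmd⟩).sub (hYd x))
    (fun x hx => (hW1 x ⟨hx.1, hx.2.trans hmd⟩).sub ((hYd x).const_mul _))
    (fun x hx => mul_nonneg (hα0.le.trans (hα x ⟨hx.1, hx.2.trans hmd⟩).1) (sq_nonneg _))
    (fun x hx => hB x ⟨hx.1, hx.2.trans hmd⟩)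
    (by
      intro x hx
      have hx' : x ∈ Icc p d := ⟨hx.1, hx.2.trans hmd⟩
      have h1 := hkk x hx'
      have h2 : 0 ≤ α x * G x := mul_nonneg (hα0.le.trans (hα x hx').1) (hG x hx')
      simp only [hode x hx']
      nlinarith)
    (by have := hYE p hpp; simp only [hW0]; linarith)
    (by have := hYE p hpp
        have : 0 < Y p := by linarith
        have : 0 < k * μ * Y p := by positivity
        simp only [hW10]; linarith)
  have hm := ph1 m ⟨hpm, le_rfl⟩
  have hqd : ∀ x, HasDerivAt (fun x : ℝ => κ * (x - m)^2) (κ * (2 * (x - m))) x := by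
    intro x
    have := (((hasDerivAt_id x).sub_const m).pow 2).const_mul κ
    exact this.congr_deriv (by simp)
  have hqd2 : ∀ x, HasDerivAt (fun x : ℝ => κ * (2 * (x - m))) (κ * 2) x := by
    intro x
    have := ((((hasDerivAt_id x).sub_const m).const_mul 2)).const_mul κ
    exact this.congr_deriv (by simp)
  have ph2 := sys_cmp (Q := fun x => W x - (Y x - κ * (x - m)^2))
    (R := fun x => W1 x - (k * μ * Y x - κ * (2 * (x - m))))
    (Rd := fun x => W2 x - (k * μ * (k * μ * Y x) - κ * 2)) (A := fun x => α x * μ^2)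
    (B := fun x => α x * b x) (p := m) (q := d) (β := α1 * β)
    (fun x hx => (hW x ⟨hpm.trans hx.1, hx.2⟩).sub ((hYd x).sub (hqd x)))
    (fun x hx => (hW1 x ⟨hpm.trans hx.1, hx.2⟩).sub (((hYd x).const_mul _).sub (hqd2 x)))
    (fun x hx => mul_nonneg (hα0.le.trans (hα x ⟨hpm.trans hx.1, hx.2⟩).1) (sq_nonneg _))
    (fun x hx => hB x ⟨hpm.trans hx.1, hx.2⟩)
    (by
      intro x hx
      have hx' : x ∈ Icc p d := ⟨hpm.trans hx.1, hx.2⟩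
      have h1 := hkk x hx'
      have hax : 0 ≤ α x := (hα0.le.trans (hα x hx').1)
      have hg0 : 0 ≤ G x := hG x hx'
      have h2 : κ * (2 + 2 * α1 * β * (d - m)) ≤ α x * G x := by
        refine hκγ.trans ((mul_le_mul_of_nonneg_left (hGm x hx) hα0.le).trans ?_)
        exact mul_le_mul_of_nonneg_right (hα x hx').1 hg0
      have h3 : α x * b x * (x - m) ≤ α1 * β * (d - m) := by
        have := (le_abs_self _).trans (hB x hx')
        have h0 : 0 ≤ x - m := sub_nonneg.2 hx.1
        have h00 : x - m ≤ d - m := by linarith [hx.2]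
        calc _ ≤ α1 * β * (x - m) := by gcongr
          _ ≤ _ := by gcongr
      have h4 : κ * (2 + 2 * (α x * b x * (x - m))) ≤ κ * (2 + 2 * α1 * β * (d - m)) := by
        apply mul_le_mul_of_nonneg_left _ hκ
        linarith
      have h5 : 0 ≤ α x * μ^2 * (κ * (x - m)^2) := by positivity
      simp only [hode x hx']
      nlinarith)
    (by simpa using hm.1)
    (by simpa using hm.2)
  have := (ph2 d ⟨hmd, le_rfl⟩).1
  simp only [hY] at this
  linarith

lemma slice_cont {v : ℝ → ℝ → ℝ} {ε : ℝ}
    (hv : ContinuousOn (fun p : ℝ × ℝ => v p.1 p.2) (Icc 0 ε ×ˢ univ)) (x : ℝ) :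
    ContinuousOn (fun t => v t x) (Icc 0 ε) := by
  have : ContinuousOn (fun t : ℝ => (t, x)) (Icc 0 ε) := by fun_prop
  exact hv.comp this (fun t ht => ⟨ht, mem_univ _⟩)

lemma weighted_cont {v : ℝ → ℝ → ℝ} {ε l : ℝ}
    (hv : ContinuousOn (fun p : ℝ × ℝ => v p.1 p.2) (Icc 0 ε ×ˢ univ)) (x : ℝ) :
    ContinuousOn (fun t => Real.exp (-(l * t)) * v t x) (Icc 0 ε) := by
  have h1 : ContinuousOn (fun t : ℝ => Real.exp (-(l * t))) (Icc 0 ε) := by fun_prop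
  exact h1.mul (slice_cont hv x)

lemma weighted_int {v : ℝ → ℝ → ℝ} {ε l : ℝ} (hε : 0 ≤ ε)
    (hv : ContinuousOn (fun p : ℝ × ℝ => v p.1 p.2) (Icc 0 ε ×ˢ univ)) (x : ℝ) :
    IntervalIntegrable (fun t => Real.exp (-(l * t)) * v t x) MeasureTheory.volume 0 ε := by
  apply ContinuousOn.intervalIntegrable
  rw [uIcc_of_le hε]
  exact weighted_cont hv x

lemma laplace_deriv {v vx : ℝ → ℝ → ℝ} {ε l : ℝ} (hε : 0 ≤ ε)
    (hv : ContinuousOn (fun p : ℝ × ℝ => v p.1 p.2) (Icc 0 ε ×ˢ univ))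
    (hvx : ContinuousOn (fun p : ℝ × ℝ => vx p.1 p.2) (Icc 0 ε ×ˢ univ))
    (hd : ∀ t ∈ Icc 0 ε, ∀ x, HasDerivAt (fun y => v t y) (vx t x) x) (x : ℝ) :
    HasDerivAt (fun y => ∫ t in (0:ℝ)..ε, Real.exp (-(l * t)) * v t y)
      (∫ t in (0:ℝ)..ε, Real.exp (-(l * t)) * vx t x) x := by
  have hcomp : IsCompact (Icc 0 ε ×ˢ Icc (x - 1) (x + 1)) := isCompact_Icc.prod isCompact_Icc
  have hc : ContinuousOn (fun p : ℝ × ℝ => Real.exp (-(l * p.1)) * vx p.1 p.2)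
      (Icc 0 ε ×ˢ Icc (x - 1) (x + 1)) := by
    have h1 : ContinuousOn (fun p : ℝ × ℝ => Real.exp (-(l * p.1)))
      (Icc 0 ε ×ˢ Icc (x - 1) (x + 1)) := by fun_prop
    exact h1.mul (hvx.mono (prod_mono_right (subset_univ _)))
  obtain ⟨C, hC⟩ := hcomp.exists_bound_of_continuousOn hc
  have hsub : uIoc 0 ε ⊆ Icc 0 ε := by
    rw [uIoc_of_le hε]; exact Ioc_subset_Icc_self
  refine (intervalIntegral.hasDerivAt_integral_of_dominated_loc_of_deriv_le
    (F := fun y t => Real.exp (-(l * t)) * v t y) (F' := fun y t => Real.exp (-(l * t)) * vx t y)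
    (bound := fun _ => C)
    (s := Icc (x - 1) (x + 1)) (Icc_mem_nhds (by linarith) (by linarith)) ?_ ?_ ?_ ?_ ?_ ?_).2
  · refine Eventually.of_forall fun y => ?_
    exact ((weighted_cont hv y).mono hsub).aestronglyMeasurable measurableSet_uIoc
  · exact weighted_int hε hv x
  · exact ((weighted_cont hvx x).mono hsub).aestronglyMeasurable measurableSet_uIoc
  · refine Eventually.of_forall fun t ht y hy => ?_
    exact hC (t, y) ⟨hsub ht, hy⟩
  · exact intervalIntegrable_const
  · refine Eventually.of_forall fun t ht y hy => ?_
    exact (hd t (hsub ht) y).const_mul _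

lemma laplace_time {w wt : ℝ → ℝ → ℝ} {ε l : ℝ} (hε : 0 ≤ ε)
    (hwt : ContinuousOn (fun p : ℝ × ℝ => wt p.1 p.2) (Icc 0 ε ×ˢ univ))
    (x : ℝ)
    (hd : ∀ t ∈ Icc 0 ε, HasDerivAt (fun s => w s x) (wt t x) t) (h0 : w 0 x = 0) :
    ∫ t in (0:ℝ)..ε, Real.exp (-(l * t)) * wt t x =
      Real.exp (-(l * ε)) * w ε x + l * ∫ t in (0:ℝ)..ε, Real.exp (-(l * t)) * w t x := by
  have h1 : ∀ t : ℝ, HasDerivAt (fun t : ℝ => Real.exp (-(l * t))) (Real.exp (-(l * t)) * (-l)) t := by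
    intro t
    have : HasDerivAt (fun t : ℝ => -(l * t)) (-l) t := by
      exact ((hasDerivAt_id t).const_mul l).neg.congr_deriv (by simp)
    exact this.exp
  have := intervalIntegral.integral_mul_deriv_eq_deriv_mul (a := 0) (b := ε)
    (u := fun t : ℝ => Real.exp (-(l * t))) (v := fun t => w t x)
    (u' := fun t => Real.exp (-(l * t)) * (-l)) (v' := fun t => wt t x)
    (fun t _ => h1 t) (fun t ht => hd t (by rwa [uIcc_of_le hε] at ht))
    (by apply Continuous.intervalIntegrable; fun_prop)
    (by apply ContinuousOn.intervalIntegrable; rw [uIcc_of_le hε]; exact slice_cont hwt x)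
  rw [this, h0, ← intervalIntegral.integral_const_mul]
  have h2 : ∀ t, Real.exp (-(l * t)) * (-l) * w t x = - (l * (Real.exp (-(l * t)) * w t x)) := by
    intro t; ring
  simp only [h2, intervalIntegral.integral_neg]
  ring

lemma tube {h : ℝ → ℝ → ℝ} {e p q : ℝ} (he : 0 < e)
    (hc : ContinuousOn (fun z : ℝ × ℝ => h z.1 z.2) (Icc 0 e ×ˢ univ))
    (h0 : ∀ x ∈ Icc p q, 0 < h 0 x) :
    ∃ e' ∈ Ioc 0 e, ∀ t ∈ Icc 0 e', ∀ x ∈ Icc p q, 0 < h t x := by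
  have hcl : ∀ t : ℝ, max 0 (min t e) ∈ Icc 0 e :=
    fun t => ⟨le_max_left _ _, max_le he.le (min_le_right _ _)⟩
  have hcont : Continuous (fun z : ℝ × ℝ => h (max 0 (min z.1 e)) z.2) := by
    rw [← continuousOn_univ]
    have h1 : ContinuousOn (fun z : ℝ × ℝ => ((max 0 (min z.1 e) : ℝ), z.2)) univ := by fun_prop
    exact hc.comp h1 (fun z _ => ⟨hcl _, mem_univ _⟩)
  obtain ⟨u, v, hu, hv, hsu, htv, huv⟩ := generalized_tube_lemma (isCompact_singleton (x := (0:ℝ)))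
    (isCompact_Icc (a := p) (b := q)) (isOpen_lt continuous_const hcont : IsOpen {z : ℝ × ℝ | 0 < h (max 0 (min z.1 e)) z.2})
    (by
      rintro ⟨t, x⟩ ⟨ht, hx⟩
      have : t = 0 := ht
      subst this
      simpa [he.le] using h0 x hx)
  obtain ⟨r, hr, hball⟩ := Metric.isOpen_iff.1 hu 0 (hsu rfl)
  refine ⟨min e (r / 2), ⟨by positivity, min_le_left _ _⟩, fun t ht x hx => ?_⟩
  have htu : t ∈ u := by
    apply hball
    rw [Metric.mem_ball, Real.dist_eq, sub_zero, abs_of_nonneg ht.1]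
    have := ht.2.trans (min_le_right _ _)
    linarith
  have := huv (show (t, x) ∈ u ×ˢ v from ⟨htu, htv hx⟩)
  have hte : min t e = t := min_eq_left (ht.2.trans (min_le_left _ _))
  simpa [hte, ht.1] using this

lemma small_exists {H k L a c : ℝ} (ha : 0 < a) (hc : 0 < c) :
    ∃ μ : ℝ, 1 ≤ μ ∧ H * Real.exp (-(μ^2 * a)) * Real.exp (k * μ * L)
      < c * Real.exp (-(μ^2 * (a / 2))) := by
  have h1 : Tendsto (fun μ : ℝ => μ * (a / 2) - k * L) atTop atTop :=
    tendsto_atTop_add_const_right _ _ (tendsto_id.atTop_mul_const (by positivity))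
  have h2 : Tendsto (fun μ : ℝ => H * Real.exp (-(μ * (μ * (a / 2) - k * L)))) atTop (nhds (H * 0)) :=
    (Real.tendsto_exp_neg_atTop_nhds_zero.comp (tendsto_id.atTop_mul_atTop₀ h1)).const_mul H
  rw [mul_zero] at h2
  obtain ⟨μ, hμ1, hμ⟩ := ((eventually_ge_atTop 1).and (h2.eventually (gt_mem_nhds hc))).exists
  refine ⟨μ, hμ1, ?_⟩
  have : H * Real.exp (-(μ^2 * a)) * Real.exp (k * μ * L) =
      H * Real.exp (-(μ * (μ * (a / 2) - k * L))) * Real.exp (-(μ^2 * (a / 2))) := by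
    rw [mul_assoc H, mul_assoc H, ← Real.exp_add, ← Real.exp_add]
    congr 2
    ring
  rw [this]
  exact mul_lt_mul_of_pos_right hμ (Real.exp_pos _)

lemma exp_int_lower {g : ℝ → ℝ} {ε l γ : ℝ} (hε : 0 < ε) (hl : 0 ≤ l) (hγ : 0 ≤ γ)
    (hgint : IntervalIntegrable (fun t => Real.exp (-(l * t)) * g t) MeasureTheory.volume 0 ε)
    (hg : ∀ t ∈ Icc 0 ε, γ ≤ g t) :
    γ * (ε / 2) * Real.exp (-(l * (ε / 2))) ≤ ∫ t in (0:ℝ)..ε, Real.exp (-(l * t)) * g t := by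
  have hs1 : IntervalIntegrable (fun t => Real.exp (-(l * t)) * g t) MeasureTheory.volume 0 (ε / 2) :=
    hgint.mono_set (by rw [uIcc_of_le hε.le, uIcc_of_le (by positivity)]; exact Icc_subset_Icc_right (by linarith))
  have hs2 : IntervalIntegrable (fun t => Real.exp (-(l * t)) * g t) MeasureTheory.volume (ε / 2) ε :=
    hgint.mono_set (by rw [uIcc_of_le hε.le, uIcc_of_le (by linarith)]; exact Icc_subset_Icc_left (by positivity))
  rw [← intervalIntegral.integral_add_adjacent_intervals hs1 hs2]
  have h2 : 0 ≤ ∫ t in (ε/2)..ε, Real.exp (-(l * t)) * g t := by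
    apply intervalIntegral.integral_nonneg (by linarith)
    intro t ht
    exact mul_nonneg (Real.exp_pos _).le (hγ.trans (hg t ⟨by linarith [ht.1], ht.2⟩))
  have h1 : ∫ t in (0:ℝ)..(ε/2), Real.exp (-(l * (ε / 2))) * γ ≤ ∫ t in (0:ℝ)..(ε/2), Real.exp (-(l * t)) * g t := by
    apply intervalIntegral.integral_mono_on (by positivity) intervalIntegrable_const hs1
    intro t ht
    have h3 : Real.exp (-(l * (ε / 2))) ≤ Real.exp (-(l * t)) := by
      apply Real.exp_le_exp.2
      have := mul_le_mul_of_nonneg_left ht.2 hl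
      linarith
    exact mul_le_mul h3 (hg t ⟨ht.1, by linarith [ht.2]⟩) hγ (Real.exp_pos _).le
  rw [intervalIntegral.integral_const] at h1
  simp only [smul_eq_mul, sub_zero] at h1
  linarith

structure Sol (T : ℝ) (b s f F1 F : ℝ → ℝ) (u ux uxx ut : ℝ → ℝ → ℝ) : Prop where
  cu : ContinuousOn (fun p : ℝ × ℝ => u p.1 p.2) (Ico 0 T ×ˢ univ)
  cux : ContinuousOn (fun p : ℝ × ℝ => ux p.1 p.2) (Ico 0 T ×ˢ univ)
  cuxx : ContinuousOn (fun p : ℝ × ℝ => uxx p.1 p.2) (Ico 0 T ×ˢ univ)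
  cut : ContinuousOn (fun p : ℝ × ℝ => ut p.1 p.2) (Ico 0 T ×ˢ univ)
  dt : ∀ t ∈ Ico 0 T, ∀ x, HasDerivAt (fun r => u r x) (ut t x) t
  dx : ∀ t ∈ Ico 0 T, ∀ x, HasDerivAt (fun y => u t y) (ux t x) x
  dxx : ∀ t ∈ Ico 0 T, ∀ x, HasDerivAt (fun y => ux t y) (uxx t x) x
  pde : ∀ t ∈ Ico 0 T, ∀ x, ut t x = (1 / 2) * (s x) ^ 2 * uxx t x + b x * ux t x
  ic : ∀ x, u 0 x = f x
  ic1 : ∀ x, ux 0 x = F1 x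
  ic2 : ∀ x, uxx 0 x = F x

lemma core {T : ℝ} {b s st f F1 F : ℝ → ℝ} {u ux uxx ut v vx vxx vt : ℝ → ℝ → ℝ}
    (hu : Sol T b s f F1 F u ux uxx ut) (hv : Sol T b st f F1 F v vx vxx vt)
    (hb : Continuous b) (hs : Continuous s) (hst : Continuous st) (hF : Continuous F)
    (hspos : ∀ x, 0 < s x) (hF0 : ∀ x, F x ≠ 0)
    {ε : ℝ} (hε : ε ∈ Ioo 0 T) {ω : Set ℝ} (hω : IsOpen ω)
    (hobs : ∀ t ∈ Ioo 0 ε, ∀ x ∈ ω, u t x = v t x)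
    {p c d : ℝ} (hp : p ∈ ω) (hpc : p ≤ c) (hcd : c < d)
    (hD0 : ∀ x ∈ Icc p d, 0 ≤ ((s x)^2 - (st x)^2) * F x)
    (hD : ∀ x ∈ Ioc c d, 0 < ((s x)^2 - (st x)^2) * F x) : False := by
  set w : ℝ → ℝ → ℝ := fun t x => u t x - v t x with hw
  set wx : ℝ → ℝ → ℝ := fun t x => ux t x - vx t x with hwx
  set wxx : ℝ → ℝ → ℝ := fun t x => uxx t x - vxx t x with hwxx
  set wt : ℝ → ℝ → ℝ := fun t x => ut t x - vt t x with hwt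
  set g : ℝ → ℝ → ℝ := fun t x => (1 / 2) * ((s x)^2 - (st x)^2) * vxx t x with hg
  have hsubT : ∀ e, e ≤ ε → Icc 0 e ⊆ Ico 0 T :=
    fun e he t ht => ⟨ht.1, lt_of_le_of_lt (ht.2.trans he) hε.2⟩
  have hsubP : ∀ e, e ≤ ε → (Icc 0 e ×ˢ (univ : Set ℝ)) ⊆ Ico 0 T ×ˢ univ :=
    fun e he => prod_mono_left (hsubT e he)
  have cw : ContinuousOn (fun p : ℝ × ℝ => w p.1 p.2) (Ico 0 T ×ˢ univ) := hu.cu.sub hv.cu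
  have cwx : ContinuousOn (fun p : ℝ × ℝ => wx p.1 p.2) (Ico 0 T ×ˢ univ) := hu.cux.sub hv.cux
  have cwxx : ContinuousOn (fun p : ℝ × ℝ => wxx p.1 p.2) (Ico 0 T ×ˢ univ) := hu.cuxx.sub hv.cuxx
  have cwt : ContinuousOn (fun p : ℝ × ℝ => wt p.1 p.2) (Ico 0 T ×ˢ univ) := hu.cut.sub hv.cut
  have cg : ContinuousOn (fun p : ℝ × ℝ => g p.1 p.2) (Ico 0 T ×ˢ univ) := by
    have : Continuous (fun p : ℝ × ℝ => (1 / 2) * ((s p.2)^2 - (st p.2)^2)) := by fun_prop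
    exact this.continuousOn.mul hv.cuxx
  have hpde : ∀ t ∈ Ico 0 T, ∀ x, wt t x = (1/2) * (s x)^2 * wxx t x + b x * wx t x + g t x := by
    intro t ht x
    simp only [hwt, hwx, hwxx, hg, hu.pde t ht x, hv.pde t ht x]
    ring
  have hw0 : ∀ x, w 0 x = 0 := by intro x; simp only [hw, hu.ic, hv.ic, sub_self]
  have h0T : (0:ℝ) ∈ Ico 0 T := ⟨le_rfl, hε.1.trans hε.2⟩
  -- choice of the small time
  have cF : ContinuousOn (fun p : ℝ × ℝ => vxx p.1 p.2 * F p.2) (Icc 0 (ε/2) ×ˢ univ) := by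
    have : Continuous (fun p : ℝ × ℝ => F p.2) := by fun_prop
    exact (hv.cuxx.mono (hsubP _ (by linarith [hε.1]))).mul this.continuousOn
  obtain ⟨e1, he1, hpos1⟩ := tube (h := fun t x => vxx t x * F x) (p := p) (q := d)
    (half_pos hε.1) cF (by
      intro x _
      simp only [hv.ic2]
      exact mul_self_pos.2 (hF0 x))
  obtain ⟨e2, he2, hpos2⟩ := tube (h := wt) (p := d) (q := d)
    (half_pos hε.1) (cwt.mono (hsubP _ (by linarith [hε.1]))) (by
      intro x hx
      have hxd : x = d := le_antisymm hx.2 hx.1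
      subst hxd
      rw [hpde 0 h0T]
      simp only [hwxx, hwx, hg, hu.ic1, hv.ic1, hu.ic2, hv.ic2]
      have := hD x ⟨hcd, le_rfl⟩
      nlinarith)
  set e := min e1 e2 with he
  have hepos : 0 < e := lt_min he1.1 he2.1
  have heε : e < ε := by
    have : e ≤ ε / 2 := (min_le_left _ _).trans he1.2
    linarith [hε.1]
  have hsT := hsubT e heε.le
  have hsP := hsubP e heε.le
  have hprod : ∀ D V f : ℝ, 0 < V * f → 0 ≤ D * f → 0 ≤ D * V := by
    intro D V f h1 h2
    by_contra! h
    nlinarith [mul_nonneg h2 h1.le, mul_pos_of_neg_of_neg h (neg_lt_zero.2 (sq_pos_of_ne_zero (right_ne_zero_of_mul h1.ne')))]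
  have hg0 : ∀ t ∈ Icc 0 e, ∀ x ∈ Icc p d, 0 ≤ g t x := by
    intro t ht x hx
    have h1 := hpos1 t ⟨ht.1, ht.2.trans (min_le_left _ _)⟩ x hx
    have := hprod _ _ _ h1 (hD0 x hx)
    simp only [hg]; linarith
  set m := (c + d) / 2 with hm
  have hcm : c < m := by rw [hm]; linarith
  have hmd : m < d := by rw [hm]; linarith
  have hgpos : ∀ t ∈ Icc 0 e, ∀ x ∈ Icc m d, 0 < g t x := by
    intro t ht x hx
    have hx' : x ∈ Icc p d := ⟨by linarith [hx.1], hx.2⟩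
    refine lt_of_le_of_ne (hg0 t ht x hx') (Ne.symm ?_)
    have h1 := hpos1 t ⟨ht.1, ht.2.trans (min_le_left _ _)⟩ x hx'
    have h2 := hD x ⟨by linarith [hx.1], hx.2⟩
    exact mul_ne_zero (mul_ne_zero (by norm_num) (left_ne_zero_of_mul h2.ne'))
      (left_ne_zero_of_mul h1.ne')
  obtain ⟨γ, hγ, hγg⟩ : ∃ γ, 0 < γ ∧ ∀ t ∈ Icc 0 e, ∀ x ∈ Icc m d, γ ≤ g t x := by
    obtain ⟨z, hz, hmin⟩ := (isCompact_Icc.prod isCompact_Icc : IsCompact (Icc 0 e ×ˢ Icc m d)).exists_isMinOn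
      ⟨(0, m), ⟨le_rfl, hepos.le⟩, le_rfl, hmd.le⟩
      (cg.mono (prod_mono hsT (subset_univ _)))
    exact ⟨g z.1 z.2, hgpos z.1 hz.1 z.2 hz.2, fun t ht x hx => hmin (show (t, x) ∈ _ from ⟨ht, hx⟩)⟩
  have hpd : p ≤ d := by linarith
  have cα : ContinuousOn (fun x => 2 / (s x)^2) (Icc p d) := by
    apply Continuous.continuousOn
    exact continuous_const.div (hs.pow 2) (fun x => (pow_pos (hspos x) 2).ne')
  obtain ⟨α0, hα0, hαlow⟩ : ∃ α0, 0 < α0 ∧ ∀ x ∈ Icc p d, α0 ≤ 2 / (s x)^2 := by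
    obtain ⟨z, hz, hmin⟩ := isCompact_Icc.exists_isMinOn ⟨p, le_rfl, hpd⟩ cα
    exact ⟨2 / (s z)^2, div_pos two_pos (pow_pos (hspos z) 2), fun x hx => hmin hx⟩
  obtain ⟨α1, hαup⟩ := isCompact_Icc.exists_bound_of_continuousOn cα
  obtain ⟨β, hβ⟩ := isCompact_Icc.exists_bound_of_continuousOn (hb.continuousOn (s := Icc p d))
  have chw : ContinuousOn (fun x => w e x) (Icc p d) := by
    have : ContinuousOn (fun x : ℝ => (e, x)) (Icc p d) := by fun_prop
    exact cw.comp this (fun x _ => ⟨hsT ⟨hepos.le, le_rfl⟩, mem_univ _⟩)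
  obtain ⟨H, hH⟩ := isCompact_Icc.exists_bound_of_continuousOn chw
  have hpp : p ∈ Icc p d := ⟨le_rfl, hpd⟩
  have hβ0 : 0 ≤ β := (norm_nonneg _).trans (hβ p hpp)
  have hH0 : 0 ≤ H := (norm_nonneg _).trans (hH p hpp)
  have hα10 : 0 ≤ α1 := (norm_nonneg _).trans (hαup p hpp)
  set den := 2 + 2 * α1 * β * (d - m) with hden
  have hdenpos : 0 < den := by
    have : 0 ≤ d - m := by linarith
    positivity
  have hcpos : 0 < α0 * (γ * (e / 2)) / den * (d - m)^2 := by
    have : 0 < d - m := by linarith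
    positivity
  obtain ⟨μ, hμ1, hμ⟩ := small_exists (H := H + 1) (k := α1 * (2 + β) + 1) (L := d - p) hepos hcpos
  set W : ℝ → ℝ := fun x => ∫ t in (0:ℝ)..e, Real.exp (-(μ^2 * t)) * w t x with hW
  set W1 : ℝ → ℝ := fun x => ∫ t in (0:ℝ)..e, Real.exp (-(μ^2 * t)) * wx t x with hW1
  set W2 : ℝ → ℝ := fun x => ∫ t in (0:ℝ)..e, Real.exp (-(μ^2 * t)) * wxx t x with hW2
  set G : ℝ → ℝ := fun x => ∫ t in (0:ℝ)..e, Real.exp (-(μ^2 * t)) * g t x with hG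
  have dW : ∀ x, HasDerivAt W (W1 x) x := fun x =>
    laplace_deriv hepos.le (cw.mono hsP) (cwx.mono hsP)
      (fun t ht y => (hu.dx t (hsT ht) y).sub (hv.dx t (hsT ht) y)) x
  have dW1 : ∀ x, HasDerivAt W1 (W2 x) x := fun x =>
    laplace_deriv hepos.le (cwx.mono hsP) (cwxx.mono hsP)
      (fun t ht y => (hu.dxx t (hsT ht) y).sub (hv.dxx t (hsT ht) y)) x
  have hode : ∀ x ∈ Icc p d, W2 x = 2 / (s x)^2 *
      (μ^2 * W x - b x * W1 x + Real.exp (-(μ^2 * e)) * w e x - G x) := by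
    intro x _
    have h1 := laplace_time (w := w) (wt := wt) (l := μ^2) hepos.le (cwt.mono hsP) x
      (fun t ht => (hu.dt t (hsT ht) x).sub (hv.dt t (hsT ht) x)) (hw0 x)
    have i1 := (weighted_int (l := μ^2) hepos.le (cwxx.mono hsP) x).const_mul ((1/2) * (s x)^2)
    have i2 := (weighted_int (l := μ^2) hepos.le (cwx.mono hsP) x).const_mul (b x)
    have i3 := weighted_int (l := μ^2) hepos.le (cg.mono hsP) x
    have h2 : ∫ t in (0:ℝ)..e, Real.exp (-(μ^2 * t)) * wt t x =
        (1/2) * (s x)^2 * W2 x + b x * W1 x + G x := by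
      simp only [hW2, hW1, hG]
      rw [← intervalIntegral.integral_const_mul, ← intervalIntegral.integral_const_mul,
        ← intervalIntegral.integral_add i1 i2, ← intervalIntegral.integral_add (i1.add i2) i3]
      apply intervalIntegral.integral_congr
      intro t ht
      rw [uIcc_of_le hepos.le] at ht
      simp only [hpde t (hsT ht) x]
      ring
    have hsx := (hspos x).ne'
    rw [h2] at h1
    field_simp
    change _ = _ + μ^2 * W x at h1
    linarith
  have hnear : ∀ x ∈ ω, W x = 0 := by
    intro x hx
    have : ∫ t in (0:ℝ)..e, Real.exp (-(μ^2 * t)) * w t x = ∫ t in (0:ℝ)..e, (0:ℝ) := by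
      apply intervalIntegral.integral_congr
      intro t ht
      rw [uIcc_of_le hepos.le] at ht
      have : w t x = 0 := by
        rcases ht.1.eq_or_lt with h | h
        · rw [← h]; exact hw0 x
        · simp only [hw]
          rw [hobs t ⟨h, lt_of_le_of_lt ht.2 heε⟩ x hx, sub_self]
      simp [this]
    simp only [hW]; rw [this]; simp
  have hW1p : W1 p = 0 := by
    have h1 : W =ᶠ[nhds p] fun _ => 0 := by
      filter_upwards [hω.mem_nhds hp] with x hx using hnear x hx
    exact (dW p).unique ((hasDerivAt_const p (0:ℝ)).congr_of_eventuallyEq h1)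
  have hGnn : ∀ x ∈ Icc p d, 0 ≤ G x := by
    intro x hx
    apply intervalIntegral.integral_nonneg hepos.le
    intro t ht
    exact mul_nonneg (Real.exp_pos _).le (hg0 t ht x hx)
  have hGlow : ∀ x ∈ Icc m d, γ * (e / 2) * Real.exp (-(μ^2 * (e / 2))) ≤ G x := by
    intro x hx
    exact exp_int_lower hepos (sq_nonneg _) hγ.le (weighted_int hepos.le (cg.mono hsP) x)
      (fun t ht => hγg t ht x hx)
  have hfin := ode_bound (W := W) (W1 := W1) (W2 := W2) (α := fun x => 2 / (s x)^2) (b := b)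
    (h := fun x => w e x) (G := G) (p := p) (m := m) (d := d) (ε := e) (μ := μ) (α0 := α0) (α1 := α1)
    (β := β) (H := H + 1) (γ := γ * (e / 2) * Real.exp (-(μ^2 * (e / 2))))
    (κ := α0 * (γ * (e / 2) * Real.exp (-(μ^2 * (e / 2)))) / den)
    (k := α1 * (2 + β) + 1) (by linarith) hmd.le hμ1 hα0 (by linarith) rfl hβ0 (by positivity)
    (fun x _ => dW x) (fun x _ => dW1 x) hode
    (fun x hx => ⟨hαlow x hx, (le_abs_self _).trans (hαup x hx)⟩) hβ
    (fun x hx => (hH x hx).trans (by linarith)) hGnn hGlow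
    (by rw [div_mul_cancel₀ _ hdenpos.ne']) (hnear p hp) hW1p
  have hWd : 0 ≤ W d := by
    apply intervalIntegral.integral_nonneg hepos.le
    intro t ht
    refine mul_nonneg (Real.exp_pos _).le ?_
    have hder : ∀ r ∈ Icc 0 e, HasDerivAt (fun r => w r d) (wt r d) r :=
      fun r hr => (hu.dt r (hsT hr) d).sub (hv.dt r (hsT hr) d)
    have hmono : MonotoneOn (fun r => w r d) (Icc 0 e) := by
      apply monotoneOn_of_deriv_nonneg (convex_Icc 0 e)
      · exact fun r hr => (hder r hr).continuousAt.continuousWithinAt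
      · exact fun r hr => (hder r (interior_subset hr)).differentiableAt.differentiableWithinAt
      · intro r hr
        have hr' := interior_subset hr
        rw [(hder r hr').deriv]
        exact (hpos2 r ⟨hr'.1, hr'.2.trans (min_le_right _ _)⟩ d ⟨le_rfl, le_rfl⟩).le
    have := hmono (left_mem_Icc.2 hepos.le) ht ht.1
    simpa only [hw0] using this
  have heq : α0 * (γ * (e / 2) * Real.exp (-(μ^2 * (e / 2)))) / den * (d - m)^2 =
      α0 * (γ * (e / 2)) / den * (d - m)^2 * Real.exp (-(μ^2 * (e / 2))) := by ring
  linarith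

lemma sign_const {D : ℝ → ℝ} {c d : ℝ} (hD : Continuous D) (h : ∀ x ∈ Ioc c d, D x ≠ 0)
    (hd : 0 < D d) : ∀ x ∈ Ioc c d, 0 < D x := by
  intro x hx
  by_contra! hn
  obtain ⟨y, hy, hy0⟩ := intermediate_value_Icc hx.2 hD.continuousOn ⟨hn, hd.le⟩
  exact h y ⟨lt_of_lt_of_le hx.1 hy.1, hy.2⟩ hy0

lemma right_ext {T : ℝ} {b s st f F1 F : ℝ → ℝ} {u ux uxx ut v vx vxx vt : ℝ → ℝ → ℝ}
    (hu : Sol T b s f F1 F u ux uxx ut) (hv : Sol T b st f F1 F v vx vxx vt)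
    (hb : Continuous b) (hs : Continuous s) (hst : Continuous st) (hF : Continuous F)
    (hspos : ∀ x, 0 < s x) (hstpos : ∀ x, 0 < st x) (hF0 : ∀ x, F x ≠ 0)
    (hra : ∀ c, ∃ φ, AnalyticAt ℝ φ c ∧ s =ᶠ[nhdsWithin c (Ioi c)] φ)
    (hrat : ∀ c, ∃ φ, AnalyticAt ℝ φ c ∧ st =ᶠ[nhdsWithin c (Ioi c)] φ)
    {ε : ℝ} (hε : ε ∈ Ioo 0 T) {ω : Set ℝ} (hω : IsOpen ω)
    (hobs : ∀ t ∈ Ioo 0 ε, ∀ x ∈ ω, u t x = v t x)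
    {p : ℝ} (hp : p ∈ ω) : ∀ y, p ≤ y → s y = st y := by
  by_contra! hcon
  obtain ⟨y, hpy, hy⟩ := hcon
  set S := {x | p ≤ x ∧ s x ≠ st x} with hS
  have hne : S.Nonempty := ⟨y, hpy, hy⟩
  have hbd : BddBelow S := ⟨p, fun x hx => hx.1⟩
  set c := sInf S with hc
  have hpc : p ≤ c := le_csInf hne (fun x hx => hx.1)
  have heq : ∀ x, p ≤ x → x < c → s x = st x := by
    intro x h1 h2
    by_contra h
    exact absurd (csInf_le hbd (show x ∈ S from ⟨h1, h⟩)) (not_le.2 h2)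
  obtain ⟨φ, hφ, hsφ⟩ := hra c
  obtain ⟨φt, hφt, hsφt⟩ := hrat c
  rcases (hφ.sub hφt).eventually_eq_zero_or_eventually_ne_zero with hz | hz
  · have h1 : s =ᶠ[nhdsWithin c (Ioi c)] st := by
      filter_upwards [hsφ, hsφt, hz.filter_mono nhdsWithin_le_nhds] with x h1 h2 h3
      rw [h1, h2]; exact sub_eq_zero.1 h3
    have hcc : s c = st c := by
      have t1 : Tendsto s (nhdsWithin c (Ioi c)) (nhds (s c)) := hs.continuousAt.continuousWithinAt
      have t2 : Tendsto st (nhdsWithin c (Ioi c)) (nhds (st c)) := hst.continuousAt.continuousWithinAt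
      exact tendsto_nhds_unique t1 (t2.congr' h1.symm)
    obtain ⟨d, hd, hsub⟩ := mem_nhdsGT_iff_exists_Ioc_subset.1 h1
    have : d ≤ c := by
      rw [hc]
      apply le_csInf hne
      intro x hx
      by_contra! hxd
      rcases lt_trichotomy x c with h | h | h
      · exact hx.2 (heq x hx.1 h)
      · exact hx.2 (h ▸ hcc)
      · exact hx.2 (hsub ⟨h, hxd.le⟩)
    exact absurd hd (not_lt.2 this)
  · have h1 : ∀ᶠ x in nhdsWithin c (Ioi c), s x ≠ st x := by
      filter_upwards [hsφ, hsφt, hz.filter_mono (nhdsWithin_mono c (fun x hx => ne_of_gt hx))] with x h1 h2 h3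
      rw [h1, h2]; exact sub_ne_zero.1 h3
    obtain ⟨d, hd, hsub⟩ := mem_nhdsGT_iff_exists_Ioc_subset.1 h1
    have hcd : c < d := hd
    have hfin : ∀ D : ℝ → ℝ, Continuous D → (∀ x, s x = st x → D x = 0) → (∀ x ∈ Ioc c d, 0 < D x) →
        ∀ x ∈ Icc p d, 0 ≤ D x := by
      intro D hDc hD0 hDp x hx
      rcases lt_trichotomy x c with h | h | h
      · rw [hD0 x (heq x hx.1 h)]
      · have t1 : Tendsto D (nhdsWithin c (Ioi c)) (nhds (D c)) := hDc.continuousAt.continuousWithinAt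
        rw [h]
        refine ge_of_tendsto t1 ?_
        filter_upwards [Ioc_mem_nhdsGT hcd] with z hz using (hDp z hz).le
      · exact (hDp x ⟨h, hx.2⟩).le
    have hDne : ∀ x, s x ≠ st x → ((s x)^2 - (st x)^2) * F x ≠ 0 := by
      intro x hx
      refine mul_ne_zero ?_ (hF0 x)
      rw [sq_sub_sq]
      exact mul_ne_zero (by linarith [hspos x, hstpos x]) (sub_ne_zero.2 hx)
    rcases lt_or_gt_of_ne (hDne d (hsub ⟨hcd, le_rfl⟩)) with hn | hn
    · have hcont : Continuous (fun x => ((st x)^2 - (s x)^2) * F x) := by fun_prop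
      have hpos := sign_const (c := c) (d := d) hcont (fun x hx h0 => hDne x (hsub hx) (by linarith)) (by linarith)
      exact core hv hu hb hst hs hF hstpos hF0 hε hω (fun t ht x hx => (hobs t ht x hx).symm) hp hpc hcd
        (hfin _ hcont (fun x h => by simp [h]) hpos) hpos
    · have hcont : Continuous (fun x => ((s x)^2 - (st x)^2) * F x) := by fun_prop
      have hpos := sign_const (c := c) (d := d) hcont (fun x hx => hDne x (hsub hx)) hn
      exact core hu hv hb hs hst hF hspos hF0 hε hω hobs hp hpc hcd
        (hfin _ hcont (fun x h => by simp [h]) hpos) hpos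

lemma Sol.reflect {T : ℝ} {b s f F1 F : ℝ → ℝ} {u ux uxx ut : ℝ → ℝ → ℝ}
    (h : Sol T b s f F1 F u ux uxx ut) :
    Sol T (fun x => - b (-x)) (fun x => s (-x)) (fun x => f (-x)) (fun x => - F1 (-x))
      (fun x => F (-x)) (fun t x => u t (-x)) (fun t x => - ux t (-x)) (fun t x => uxx t (-x))
      (fun t x => ut t (-x)) := by
  have hc : ContinuousOn (fun p : ℝ × ℝ => (p.1, -p.2)) (Ico 0 T ×ˢ univ) := by fun_prop
  have hm : MapsTo (fun p : ℝ × ℝ => (p.1, -p.2)) (Ico 0 T ×ˢ univ) (Ico 0 T ×ˢ univ) :=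
    fun p hp => ⟨hp.1, mem_univ _⟩
  refine ⟨h.cu.comp hc hm, (h.cux.comp hc hm).neg, h.cuxx.comp hc hm, h.cut.comp hc hm,
    fun t ht x => h.dt t ht (-x), ?_, ?_, ?_, fun x => h.ic _, fun x => by rw [h.ic1],
    fun x => h.ic2 _⟩
  · intro t ht x
    have := (h.dx t ht (-x)).comp x (hasDerivAt_neg x)
    exact this.congr_deriv (by simp)
  · intro t ht x
    have := ((h.dxx t ht (-x)).comp x (hasDerivAt_neg x)).neg
    exact this.congr_deriv (by simp)
  · intro t ht x
    rw [h.pde t ht (-x)]; ring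

lemma sol_of_classical {T : ℝ} (hT : 0 < T) {b s f : ℝ → ℝ} {u : ℝ → ℝ → ℝ}
    (h : IsClassicalSolution T b s f u) :
    Sol T b s f (deriv f) (deriv (deriv f)) u (fun t x => deriv (fun y => u t y) x)
      (fun t x => deriv (deriv (fun y => u t y)) x) (fun t x => deriv (fun r => u r x) t) := by
  obtain ⟨h1, h2, h3, h4, h5, h6, h7, h8, h9⟩ := h
  have h0 : (fun y => u 0 y) = f := funext h9
  exact ⟨h1, h6, h7, h5, fun t ht x => (h2 t ht x).hasDerivAt, fun t ht x => (h3 t ht x).hasDerivAt,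
    fun t ht x => (h4 t ht x).hasDerivAt, h8, h9, fun x => by simp only [h0], fun x => by simp only [h0]⟩

lemma exists_interval {κ : ℤ → ℝ} (hκ : StrictMono κ) (hbot : Tendsto κ atBot atBot)
    (htop : Tendsto κ atTop atTop) (c : ℝ) : ∃ j, κ j ≤ c ∧ c < κ (j + 1) := by
  obtain ⟨a, ha⟩ := (hbot.eventually (eventually_le_atBot c)).exists
  obtain ⟨z, hz⟩ := (htop.eventually (eventually_gt_atTop c)).exists
  obtain ⟨j, hj, hmax⟩ := Int.exists_greatest_of_bdd (P := fun j => κ j ≤ c)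
    ⟨z, fun i hi => by
      by_contra! h
      exact absurd (hκ h) (not_lt.2 (hi.trans hz.le))⟩ ⟨a, ha⟩
  refine ⟨j, hj, ?_⟩
  by_contra! h
  have := hmax _ h
  omega

lemma exists_interval' {κ : ℤ → ℝ} (hκ : StrictMono κ) (hbot : Tendsto κ atBot atBot)
    (htop : Tendsto κ atTop atTop) (c : ℝ) : ∃ j, κ j < c ∧ c ≤ κ (j + 1) := by
  obtain ⟨j, h1, h2⟩ := exists_interval hκ hbot htop c
  rcases h1.eq_or_lt with h | h
  · refine ⟨j - 1, ?_, ?_⟩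
    · rw [← h]; exact hκ (by omega)
    · simp [h]
  · exact ⟨j, h, h2.le⟩

lemma right_analytic {ψ : ℝ → ℝ} (h : PiecewiseAnalytic ψ) (c : ℝ) :
    ∃ φ, AnalyticAt ℝ φ c ∧ ψ =ᶠ[nhdsWithin c (Ioi c)] φ := by
  obtain ⟨δ, κ, φ, -, hκ, hbot, htop, -, han, heq⟩ := h
  obtain ⟨j, h1, h2⟩ := exists_interval hκ hbot htop c
  obtain ⟨g, hg1, hg2⟩ := (analyticWithinAt_iff_exists_analyticAt).1 (han j c ⟨h1, h2.le⟩)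
  refine ⟨g, hg2, ?_⟩
  have hle : nhdsWithin c (Ioi c) ≤ nhdsWithin c (insert c (Icc (κ j) (κ (j+1)))) := by
    rw [nhdsWithin_le_iff]
    filter_upwards [Ioc_mem_nhdsGT h2] with x hx
    exact Or.inr ⟨h1.trans hx.1.le, hx.2⟩
  filter_upwards [hg1.filter_mono hle, Ioo_mem_nhdsGT h2] with x hx hx2
  rw [heq j x ⟨h1.trans hx2.1.le, hx2.2⟩, hx]

lemma left_analytic {ψ : ℝ → ℝ} (h : PiecewiseAnalytic ψ) (c : ℝ) :
    ∃ φ, AnalyticAt ℝ φ c ∧ ψ =ᶠ[nhdsWithin c (Iio c)] φ := by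
  obtain ⟨δ, κ, φ, -, hκ, hbot, htop, -, han, heq⟩ := h
  obtain ⟨j, h1, h2⟩ := exists_interval' hκ hbot htop c
  obtain ⟨g, hg1, hg2⟩ := (analyticWithinAt_iff_exists_analyticAt).1 (han j c ⟨h1.le, h2⟩)
  refine ⟨g, hg2, ?_⟩
  have hle : nhdsWithin c (Iio c) ≤ nhdsWithin c (insert c (Icc (κ j) (κ (j+1)))) := by
    rw [nhdsWithin_le_iff]
    filter_upwards [Ico_mem_nhdsLT h1] with x hx
    exact Or.inr ⟨hx.1, hx.2.le.trans h2⟩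
  filter_upwards [hg1.filter_mono hle, Ioo_mem_nhdsLT h1] with x hx hx2
  rw [heq j x ⟨hx2.1.le, lt_of_lt_of_le hx2.2 h2⟩, hx]

lemma left_analytic_neg {ψ : ℝ → ℝ} (h : PiecewiseAnalytic ψ) (c : ℝ) :
    ∃ φ, AnalyticAt ℝ φ c ∧ (fun x => ψ (-x)) =ᶠ[nhdsWithin c (Ioi c)] φ := by
  obtain ⟨φ, h1, h2⟩ := left_analytic h (-c)
  refine ⟨fun x => φ (-x), h1.fun_comp analyticAt_id.neg, ?_⟩
  have : Tendsto (fun x : ℝ => -x) (nhdsWithin c (Ioi c)) (nhdsWithin (-c) (Iio (-c))) :=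
    tendsto_neg_nhdsGT
  exact this.eventually h2

/-- Theorem 2: with known drift coefficient, the diffusion coefficient is uniquely
determined by observation of the solution on a small time-space cylinder. -/
theorem diffusion_uniqueness
    (T : ℝ) (hT : 0 < T)
    (b sigma sigmat : ℝ → ℝ)
    (hbLip : ∃ K, LipschitzWith K b)
    (hs : ClassM sigma) (hst : ClassM sigmat)
    (hspos : ∀ x, 0 < sigma x) (hstpos : ∀ x, 0 < sigmat x)
    (f : ℝ → ℝ) (hf : ContDiff ℝ 2 f) (hfdd : ∀ x, deriv (deriv f) x ≠ 0)
    (u ut : ℝ → ℝ → ℝ)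
    (hu : IsClassicalSolution T b sigma f u)
    (hut : IsClassicalSolution T b sigmat f ut)
    (ε : ℝ) (hε : ε ∈ Ioo 0 T)
    (ω : Set ℝ) (hω : IsOpen ω) (hωne : ω.Nonempty)
    (hobs : ∀ t ∈ Ioo 0 ε, ∀ x ∈ ω, u t x = ut t x) :
    ∀ x : ℝ, sigma x = sigmat x := by
  obtain ⟨p, hp⟩ := hωne
  obtain ⟨Kb, hKb⟩ := hbLip
  obtain ⟨⟨Ks, hKs⟩, hsa⟩ := hs
  obtain ⟨⟨Kt, hKt⟩, hta⟩ := hst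
  have hF : Continuous (deriv (deriv f)) := by
    have := hf.continuous_iteratedDeriv 2 le_rfl
    simpa [iteratedDeriv_succ] using this
  have su := sol_of_classical hT hu
  have sv := sol_of_classical hT hut
  intro x
  rcases le_total p x with h | h
  · exact right_ext su sv hKb.continuous hKs.continuous hKt.continuous hF hspos hstpos hfdd
      (right_analytic hsa) (right_analytic hta) hε hω hobs hp x h
  · have hbc := hKb.continuous
    have hsc := hKs.continuous
    have htc := hKt.continuous
    have := right_ext su.reflect sv.reflect (by fun_prop) (by fun_prop) (by fun_prop) (by fun_prop)
      (fun x => hspos _) (fun x => hstpos _) (fun x => hfdd _)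
      (left_analytic_neg hsa) (left_analytic_neg hta) hε (ω := (fun x => -x) ⁻¹' ω)
      (hω.preimage continuous_neg) (fun t ht x hx => hobs t ht _ hx) (p := -p) (by simpa using hp)
      (-x) (by linarith)
    simpa using this
end

section
/- Let T > 0 and let b, b̃, σ, σ̃ belong to the class M with σ(x) > 0 and σ̃(x) > 0 for all x. For k = 1, 2, let u_k be a classical solution of the parabolic equation associated with (b, σ, f_k) and let ũ_k be a classical solution of the parabolic equation associated with (b̃, σ̃, f_k), where f_k(x) = x^k. If there exist ε ∈ (0, T) and a nonempty open set ω ⊂ ℝ such that u_k(t,x) = ũ_k(t,x) for all t ∈ (0, ε), all x ∈ ω and k = 1, 2, then b(x) = b̃(x) and σ(x) = σ̃(x) for all x ∈ ℝ. -/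
open Set Filter

lemma incr {f f' : ℝ → ℝ} {a b c : ℝ} (hab : a ≤ b) (hf : ∀ x, HasDerivAt f (f' x) x)
    (h : ∀ x ∈ Icc a b, c ≤ f' x) : f a + c * (b - a) ≤ f b := by
  have := Convex.mul_sub_le_image_sub_of_le_deriv (convex_Icc a b) (f := f)
    (fun x _ => (hf x).continuousAt.continuousWithinAt)
    (fun x _ => (hf x).differentiableAt.differentiableWithinAt) (C := c)
    (fun x hx => by rw [(hf x).deriv]; exact h x (interior_subset hx)) a ⟨le_rfl, hab⟩ b ⟨hab, le_rfl⟩ hab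
  linarith

lemma ode_growth {p q x1 x2 R m s c d : ℝ} {y P P' ρ G : ℝ → ℝ}
    (hx1 : p ≤ x1) (hd : 0 < d) (hx2 : x2 = x1 + 4 * d) (hx2q : x2 ≤ q)
    (hm : 0 < m) (hs : 0 < s) (hc : 0 < c)
    (hρ : ∀ x, 0 < ρ x) (hR : ∀ x ∈ Icc p q, ρ x ≤ R)
    (hy : ∀ x, HasDerivAt y (P x / ρ x) x) (hP : ∀ x, HasDerivAt P (P' x) x)
    (hPP : ∀ x ∈ Icc p q, 0 ≤ y x → m * (s * y x + G x) ≤ P' x)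
    (hG : ∀ x ∈ Icc p q, 0 ≤ G x) (hG2 : ∀ x ∈ Icc x1 x2, c / s ≤ G x)
    (hyp : 0 < y p) (hPp : 0 ≤ P p) : m ^ 2 * c * d ^ 4 / R ^ 2 ≤ y x2 := by
  have hRpos : 0 < R := lt_of_lt_of_le (hρ p) (hR p ⟨le_rfl, by linarith⟩)
  have key : ∀ z ∈ Icc p q, (∀ x ∈ Icc p z, 0 ≤ y x) → 0 ≤ P z := by
    intro z hz h
    have := incr (c := 0) hz.1 hP (fun x hx => by
      have hx' : x ∈ Icc p q := ⟨hx.1, hx.2.trans hz.2⟩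
      refine le_trans ?_ (hPP x hx' (h x hx))
      have := h x hx
      have := hG x hx'
      positivity)
    linarith
  have hcy : Continuous y := continuous_iff_continuousAt.2 fun x => (hy x).continuousAt
  have ypos : ∀ x ∈ Icc p q, 0 < y x := by
    by_contra! hcon
    obtain ⟨w, hw, hyw⟩ := hcon
    have hcl : IsCompact (Icc p q ∩ {x | y x ≤ 0}) :=
      isCompact_Icc.inter_right (isClosed_le hcy continuous_const)
    obtain ⟨z, ⟨hz, hyz⟩, hmin⟩ := hcl.exists_isLeast ⟨w, hw, hyw⟩
    have hpos : ∀ x ∈ Ico p z, 0 < y x := by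
      intro x hx
      by_contra! h
      have := hmin ⟨⟨hx.1, hx.2.le.trans hz.2⟩, h⟩
      linarith [hx.2]
    have hpz : p < z := lt_of_le_of_ne hz.1 (by rintro rfl; simp at hyz; linarith)
    have hyz0 : 0 ≤ y z := by
      have : z ∈ closure (Ico p z) := by rw [closure_Ico hpz.ne]; exact ⟨hz.1, le_rfl⟩
      exact closure_minimal (fun x hx => (hpos x hx).le) (isClosed_le continuous_const hcy) this
    have hnn : ∀ x ∈ Icc p z, 0 ≤ y x := by
      intro x hx
      rcases hx.2.lt_or_eq with h | h
      · exact (hpos x ⟨hx.1, h⟩).le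
      · rw [h]; exact hyz0
    have := incr (c := 0) hz.1 hy (fun x hx =>
      div_nonneg (key x ⟨hx.1, hx.2.trans hz.2⟩ fun x' hx' => hnn x' ⟨hx'.1, hx'.2.trans hx.2⟩) (hρ x).le)
    simp at hyz
    linarith
  have Pnn : ∀ x ∈ Icc p q, 0 ≤ P x := fun z hz =>
    key z hz fun x hx => (ypos x ⟨hx.1, hx.2.trans hz.2⟩).le
  have P'nn : ∀ x ∈ Icc p q, 0 ≤ P' x := fun x hx => by
    refine le_trans ?_ (hPP x hx (ypos x hx).le)
    have := ypos x hx
    have := hG x hx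
    positivity
  -- step 1
  have s1 : ∀ x ∈ Icc (x1 + d) q, m * (c / s) * d ≤ P x := by
    intro x hx
    have h1 := incr (c := m * (c / s)) (show x1 ≤ x1 + d by linarith) hP (fun z hz => by
      have hz' : z ∈ Icc p q := ⟨by linarith [hz.1], by linarith [hz.2]⟩
      refine le_trans ?_ (hPP z hz' (ypos z hz').le)
      have := hG2 z ⟨hz.1, by linarith [hz.2]⟩
      have := mul_pos hs (ypos z hz')
      gcongr; linarith)
    have h2 := incr (c := 0) hx.1 hP (fun z hz => P'nn z ⟨by linarith [hz.1], hz.2.trans hx.2⟩)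
    have := Pnn x1 ⟨hx1, by linarith⟩
    linarith
  have s2 : ∀ x ∈ Icc (x1 + 2 * d) q, m * (c / s) * d / R * d ≤ y x := by
    intro x hx
    have h1 := incr (c := m * (c / s) * d / R) (show x1 + d ≤ x1 + 2 * d by linarith) hy (fun z hz => by
      have hz' : z ∈ Icc p q := ⟨by linarith [hz.1], by linarith [hz.2]⟩
      have := s1 z ⟨hz.1, hz'.2⟩
      have := hR z hz'
      have := hρ z
      have := Pnn z hz'
      gcongr)
    have h2 := incr (c := 0) hx.1 hy (fun z hz =>
      div_nonneg (Pnn z ⟨by linarith [hz.1], hz.2.trans hx.2⟩) (hρ z).le)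
    have := ypos (x1 + d) ⟨by linarith, by linarith⟩
    linarith
  have s3 : ∀ x ∈ Icc (x1 + 3 * d) q, m * (m * c * d / R * d) * d ≤ P x := by
    intro x hx
    have h1 := incr (c := m * (m * c * d / R * d)) (show x1 + 2 * d ≤ x1 + 3 * d by linarith) hP (fun z hz => by
      have hz' : z ∈ Icc p q := ⟨by linarith [hz.1], by linarith [hz.2]⟩
      refine le_trans ?_ (hPP z hz' (ypos z hz').le)
      have h3 := s2 z ⟨hz.1, hz'.2⟩
      have := hG z hz'
      have h4 : s * (m * (c / s) * d / R * d) ≤ s * y z := by gcongr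
      have h5 : s * (m * (c / s) * d / R * d) = m * c * d / R * d := by field_simp
      gcongr; linarith)
    have h2 := incr (c := 0) hx.1 hP (fun z hz => P'nn z ⟨by linarith [hz.1], hz.2.trans hx.2⟩)
    have := Pnn (x1 + 2 * d) ⟨by linarith, by linarith⟩
    linarith
  have h1 := incr (c := m * (m * c * d / R * d) * d / R) (show x1 + 3 * d ≤ x2 by linarith) hy (fun z hz => by
      have hz' : z ∈ Icc p q := ⟨by linarith [hz.1], by linarith [hz.2]⟩
      have := s3 z ⟨hz.1, hz'.2⟩
      have := hR z hz'
      have := hρ z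
      have := Pnn z hz'
      gcongr)
  have := ypos (x1 + 3 * d) ⟨by linarith, by linarith⟩
  have e : m * (m * c * d / R * d) * d / R * (x2 - (x1 + 3 * d)) = m ^ 2 * c * d ^ 4 / R ^ 2 := by
    rw [hx2]; field_simp; ring
  linarith

lemma hasDerivAt_param {τ : ℝ} (hτ : 0 ≤ τ) {g gx : ℝ → ℝ → ℝ}
    (hg : ContinuousOn (fun z : ℝ × ℝ => g z.1 z.2) (Icc 0 τ ×ˢ univ))
    (hgx : ContinuousOn (fun z : ℝ × ℝ => gx z.1 z.2) (Icc 0 τ ×ˢ univ))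
    (hd : ∀ t ∈ Icc 0 τ, ∀ x, HasDerivAt (g t) (gx t x) x) (x : ℝ) :
    HasDerivAt (fun x => ∫ t in (0:ℝ)..τ, g t x) (∫ t in (0:ℝ)..τ, gx t x) x := by
  have sl : ∀ {h : ℝ → ℝ → ℝ}, ContinuousOn (fun z : ℝ × ℝ => h z.1 z.2) (Icc 0 τ ×ˢ univ) →
      ∀ x, ContinuousOn (fun t => h t x) (Icc 0 τ) := fun {h} hh x =>
    hh.comp (f := fun t : ℝ => (t, x)) (by fun_prop) (fun t ht => ⟨ht, mem_univ _⟩)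
  have sub : Set.uIoc 0 τ ⊆ Icc 0 τ := by rw [uIoc_of_le hτ]; exact Ioc_subset_Icc_self
  obtain ⟨C, hC⟩ := (isCompact_Icc.prod (isCompact_Icc (a := x - 1) (b := x + 1))).exists_bound_of_continuousOn
    (hgx.mono (prod_mono_right (subset_univ _)))
  have intble : ∀ {h : ℝ → ℝ → ℝ}, ContinuousOn (fun z : ℝ × ℝ => h z.1 z.2) (Icc 0 τ ×ˢ univ) →
      ∀ x, IntervalIntegrable (fun t => h t x) MeasureTheory.volume 0 τ := fun hh x => by
    apply ContinuousOn.intervalIntegrable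
    rw [uIcc_of_le hτ]; exact sl hh x
  refine (intervalIntegral.hasDerivAt_integral_of_dominated_loc_of_deriv_le
    (F := fun x t => g t x) (F' := fun x t => gx t x) (bound := fun _ => C)
    (Icc_mem_nhds (show x - 1 < x by linarith) (show x < x + 1 by linarith))
    (Eventually.of_forall fun x => by have := (intble hg x).1.aestronglyMeasurable; rwa [← uIoc_of_le hτ] at this) (intble hg x)
    (by have := (intble hgx x).1.aestronglyMeasurable; rwa [← uIoc_of_le hτ] at this) ?_ (by simp) ?_).2
  · exact Eventually.of_forall fun t ht z hz => hC (t, z) ⟨sub ht, hz⟩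
  · exact Eventually.of_forall fun t ht z hz => hd t (sub ht) z

lemma hasDerivAt_exp_lin2 (a p x : ℝ) :
    HasDerivAt (fun t => Real.exp (a * (t - p))) (a * Real.exp (a * (x - p))) x := by
  have h : HasDerivAt (fun t : ℝ => a * (t - p)) a x := by
    simpa using ((hasDerivAt_id' x).sub_const p).const_mul a
  rw [mul_comm a]
  exact h.exp

lemma hasDerivAt_exp_lin (a x : ℝ) :
    HasDerivAt (fun t => Real.exp (a * t)) (a * Real.exp (a * x)) x := by
  simpa using hasDerivAt_exp_lin2 a 0 x

lemma int_exp {s τ : ℝ} (hs : 0 < s) :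
    ∫ t in (0:ℝ)..τ, Real.exp (-s * t) = (1 - Real.exp (-s * τ)) / s := by
  have h := intervalIntegral.integral_eq_sub_of_hasDerivAt (a := 0) (b := τ)
    (f := fun t => - Real.exp (-s * t) / s) (f' := fun t => Real.exp (-s * t)) (fun t _ => by
      have := ((hasDerivAt_exp_lin (-s) t).neg).div_const s
      have e : -(-s * Real.exp (-s * t)) / s = Real.exp (-s * t) := by
        rw [neg_mul, neg_neg, mul_div_cancel_left₀ _ hs.ne']
      rw [e] at this
      exact this) (by apply Continuous.intervalIntegrable; fun_prop)
  rw [h]; simp; ring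

lemma tendsto_aux {C A L τ : ℝ} (hτ : 0 < τ) :
    Tendsto (fun n : ℝ => C / n ^ 2 + C * (Real.exp (-n ^ 2 * τ) * Real.exp (A * n * L)))
      atTop (nhds 0) := by
  have h1 : Tendsto (fun n : ℝ => C / n ^ 2) atTop (nhds 0) :=
    tendsto_const_nhds.div_atTop (tendsto_pow_atTop (by norm_num))
  have h2 : Tendsto (fun n : ℝ => n * (n * τ - A * L)) atTop atTop := by
    apply Tendsto.atTop_mul_atTop₀ tendsto_id
    exact tendsto_atTop_add_const_right _ _ (tendsto_id.atTop_mul_const hτ)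
  have h3 : Tendsto (fun n : ℝ => Real.exp (-n ^ 2 * τ) * Real.exp (A * n * L)) atTop (nhds 0) := by
    have := Real.tendsto_exp_neg_atTop_nhds_zero.comp h2
    refine this.congr fun n => ?_
    simp only [Function.comp, ← Real.exp_add]
    congr 1; ring
  simpa using h1.add (h3.const_mul C)

set_option maxHeartbeats 2000000 in
lemma core_s2 {τ p q x1 d c : ℝ} (hτ : 0 < τ) {b σ : ℝ → ℝ} (hb : Continuous b) (hσ : Continuous σ)
    (hσpos : ∀ x, 0 < σ x) {W Wt Wx Wxx : ℝ → ℝ → ℝ}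
    (cW : ContinuousOn (fun z : ℝ × ℝ => W z.1 z.2) (Icc 0 τ ×ˢ univ))
    (cWt : ContinuousOn (fun z : ℝ × ℝ => Wt z.1 z.2) (Icc 0 τ ×ˢ univ))
    (cWx : ContinuousOn (fun z : ℝ × ℝ => Wx z.1 z.2) (Icc 0 τ ×ˢ univ))
    (cWxx : ContinuousOn (fun z : ℝ × ℝ => Wxx z.1 z.2) (Icc 0 τ ×ˢ univ))
    (dt : ∀ t ∈ Icc 0 τ, ∀ x, HasDerivAt (fun s => W s x) (Wt t x) t)
    (dx : ∀ t ∈ Icc 0 τ, ∀ x, HasDerivAt (W t) (Wx t x) x)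
    (dxx : ∀ t ∈ Icc 0 τ, ∀ x, HasDerivAt (Wx t) (Wxx t x) x)
    (hW0 : ∀ x, W 0 x = 0) (hWp : ∀ t ∈ Icc 0 τ, W t p = 0) (hWxp : ∀ t ∈ Icc 0 τ, Wx t p = 0)
    (hx1 : p ≤ x1) (hd : 0 < d) (hx2 : x1 + 4 * d ≤ q) (hc : 0 < c)
    (hF : ∀ t ∈ Icc 0 τ, ∀ x ∈ Icc p q,
      0 ≤ Wt t x - (1 / 2 * σ x ^ 2 * Wxx t x + b x * Wx t x))
    (hF2 : ∀ t ∈ Icc 0 τ, ∀ x ∈ Icc x1 (x1 + 4 * d),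
      c ≤ Wt t x - (1 / 2 * σ x ^ 2 * Wxx t x + b x * Wx t x)) : False := by
  have hpq : p ≤ q := by linarith
  have sl : ∀ {h : ℝ → ℝ → ℝ}, ContinuousOn (fun z : ℝ × ℝ => h z.1 z.2) (Icc 0 τ ×ˢ univ) →
      ∀ x, ContinuousOn (fun t => h t x) (Icc 0 τ) := fun {h} hh x =>
    hh.comp (f := fun t : ℝ => (t, x)) (by fun_prop) (fun t ht => ⟨ht, mem_univ _⟩)
  have intble : ∀ {h : ℝ → ℝ}, ContinuousOn h (Icc 0 τ) →
      IntervalIntegrable h MeasureTheory.volume 0 τ := fun hh => by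
    apply ContinuousOn.intervalIntegrable
    rwa [uIcc_of_le hτ.le]
  -- bounds
  obtain ⟨C, hC⟩ := (isCompact_Icc.prod (isCompact_Icc (a := p) (b := q))).exists_bound_of_continuousOn
    (cW.mono (prod_mono_right (subset_univ _)))
  obtain ⟨C0, hC0, hCC⟩ : ∃ C0 : ℝ, 0 < C0 ∧ ∀ t ∈ Icc 0 τ, ∀ x ∈ Icc p q, |W t x| ≤ C0 :=
    ⟨|C| + 1, by positivity, fun t ht x hx => (hC (t, x) ⟨ht, hx⟩).trans
      ((le_abs_self C).trans (by linarith))⟩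
  obtain ⟨B, hB⟩ := (isCompact_Icc (a := p) (b := q)).exists_bound_of_continuousOn hb.continuousOn
  have hB0 : 0 ≤ B := (norm_nonneg _).trans (hB p ⟨le_rfl, hpq⟩)
  obtain ⟨z0, hz0, hmin⟩ := (isCompact_Icc (a := p) (b := q)).exists_isMinOn ⟨p, le_rfl, hpq⟩ hσ.continuousOn
  set σ0 := σ z0 with hσ0
  have hσ0pos : 0 < σ0 := hσpos z0
  have hσmin : ∀ x ∈ Icc p q, σ0 ≤ σ x := fun x hx => hmin hx
  set A : ℝ := 1 + 2 * (B + 2) / σ0 ^ 2 with hA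
  have hA1 : 1 ≤ A := by rw [hA]; have : 0 ≤ 2 * (B + 2) / σ0 ^ 2 := by positivity
                         linarith
  have hA2 : B + 2 ≤ 1 / 2 * σ0 ^ 2 * A := by
    have : 1 / 2 * σ0 ^ 2 * A = 1 / 2 * σ0 ^ 2 + (B + 2) := by rw [hA]; field_simp
    rw [this]; nlinarith [sq_nonneg σ0]
  have cbs : Continuous fun x => 2 * b x / σ x ^ 2 :=
    (continuous_const.mul hb).div (hσ.pow 2) fun x => (pow_pos (hσpos x) 2).ne'
  set ρ : ℝ → ℝ := fun x => Real.exp (∫ z in p..x, 2 * b z / σ z ^ 2) with hρdef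
  have hρ : ∀ x, 0 < ρ x := fun x => Real.exp_pos _
  have dρ : ∀ x, HasDerivAt ρ (ρ x * (2 * b x / σ x ^ 2)) x := fun x =>
    (cbs.integral_hasStrictDerivAt p x).hasDerivAt.exp
  have cρ : Continuous ρ := continuous_iff_continuousAt.2 fun x => (dρ x).continuousAt
  obtain ⟨R, hR⟩ := (isCompact_Icc (a := p) (b := q)).exists_bound_of_continuousOn cρ.continuousOn
  have hR' : ∀ x ∈ Icc p q, ρ x ≤ R := fun x hx => (le_abs_self _).trans (hR x hx)
  have hRpos : 0 < R := (hρ p).trans_le (hR' p ⟨le_rfl, hpq⟩)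
  have cm : Continuous fun x => 2 * ρ x / σ x ^ 2 :=
    (continuous_const.mul cρ).div (hσ.pow 2) fun x => (pow_pos (hσpos x) 2).ne'
  obtain ⟨z1, hz1, hmin1⟩ := (isCompact_Icc (a := p) (b := q)).exists_isMinOn ⟨p, le_rfl, hpq⟩ cm.continuousOn
  set m := 2 * ρ z1 / σ z1 ^ 2 with hm
  have hmpos : 0 < m := by have := hρ z1; have := hσpos z1; positivity
  have hmle : ∀ x ∈ Icc p q, m ≤ 2 * ρ x / σ x ^ 2 := fun x hx => hmin1 hx
  set c' : ℝ := c * (1 - Real.exp (-τ)) with hc'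
  have hc'pos : 0 < c' := by
    have : Real.exp (-τ) < 1 := by rw [Real.exp_lt_one_iff]; linarith
    rw [hc']; apply mul_pos hc; linarith
  have main : ∀ n : ℝ, 1 ≤ n → m ^ 2 * c' * d ^ 4 / R ^ 2 ≤
      C0 / n ^ 2 + C0 * (Real.exp (-n ^ 2 * τ) * Real.exp (A * n * (x1 + 4 * d - p))) := by
    intro n hn
    have hn0 : 0 < n := by linarith
    set s := n ^ 2 with hs
    have hs1 : 1 ≤ s := by rw [hs]; nlinarith
    have hspos : 0 < s := by linarith
    set e : ℝ → ℝ := fun t => Real.exp (-s * t) with he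
    have ce : Continuous e := by rw [he]; fun_prop
    have hepos : ∀ t, 0 < e t := fun t => Real.exp_pos _
    have cmul : ∀ {h : ℝ → ℝ → ℝ}, ContinuousOn (fun z : ℝ × ℝ => h z.1 z.2) (Icc 0 τ ×ˢ univ) →
        ContinuousOn (fun z : ℝ × ℝ => (fun t x => e t * h t x) z.1 z.2) (Icc 0 τ ×ˢ univ) :=
      fun hh => (ce.comp continuous_fst).continuousOn.mul hh
    set v : ℝ → ℝ := fun x => ∫ t in (0:ℝ)..τ, e t * W t x with hv
    set v1 : ℝ → ℝ := fun x => ∫ t in (0:ℝ)..τ, e t * Wx t x with hv1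
    set v2 : ℝ → ℝ := fun x => ∫ t in (0:ℝ)..τ, e t * Wxx t x with hv2
    have dv : ∀ x, HasDerivAt v (v1 x) x := hasDerivAt_param hτ.le (cmul cW) (cmul cWx)
      fun t ht x => (dx t ht x).const_mul _
    have dv1 : ∀ x, HasDerivAt v1 (v2 x) x := hasDerivAt_param hτ.le (cmul cWx) (cmul cWxx)
      fun t ht x => (dxx t ht x).const_mul _
    set G : ℝ → ℝ := fun x => ∫ t in (0:ℝ)..τ, e t *
      (Wt t x - (1 / 2 * σ x ^ 2 * Wxx t x + b x * Wx t x)) with hGdef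
    have iW := fun x => intble (sl (h := fun t x => e t * W t x) (cmul cW) x)
    have iWt := fun x => intble (sl (h := fun t x => e t * Wt t x) (cmul cWt) x)
    have iWx := fun x => intble (sl (h := fun t x => e t * Wx t x) (cmul cWx) x)
    have iWxx := fun x => intble (sl (h := fun t x => e t * Wxx t x) (cmul cWxx) x)
    have cF : ∀ x, ContinuousOn (fun t => Wt t x - (1 / 2 * σ x ^ 2 * Wxx t x + b x * Wx t x)) (Icc 0 τ) := by
      intro x
      have := sl cWt x
      have := sl cWx x
      have := sl cWxx x
      fun_prop
    have iG := fun x => intble (ce.continuousOn.mul (cF x))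
    have ie : IntervalIntegrable e MeasureTheory.volume 0 τ := intble ce.continuousOn
    -- ODE
    have parts : ∀ x, ∫ t in (0:ℝ)..τ, e t * Wt t x = e τ * W τ x + s * v x := by
      intro x
      have h := intervalIntegral.integral_mul_deriv_eq_deriv_mul (a := 0) (b := τ)
        (u := e) (u' := fun t => -s * e t) (v := fun t => W t x) (v' := fun t => Wt t x)
        (fun t _ => hasDerivAt_exp_lin (-s) t)
        (fun t ht => by rw [uIcc_of_le hτ.le] at ht; exact dt t ht x)
        (intble (by fun_prop)) (intble (sl cWt x))
      rw [h, hW0]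
      have : ∫ t in (0:ℝ)..τ, -s * e t * W t x = -s * v x := by
        rw [hv]; simp only [mul_assoc]
        rw [intervalIntegral.integral_const_mul]
      rw [this]; ring
    have ode : ∀ x, 1 / 2 * σ x ^ 2 * v2 x + b x * v1 x = e τ * W τ x + s * v x - G x := by
      intro x
      have : G x = (∫ t in (0:ℝ)..τ, e t * Wt t x) - (1 / 2 * σ x ^ 2 * v2 x + b x * v1 x) := by
        simp only [hGdef, hv1, hv2]
        rw [← intervalIntegral.integral_const_mul, ← intervalIntegral.integral_const_mul,
          ← intervalIntegral.integral_add ((iWxx x).const_mul _) ((iWx x).const_mul _),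
          ← intervalIntegral.integral_sub (iWt x) (((iWxx x).const_mul _).add ((iWx x).const_mul _))]
        congr 1; ext t; ring
      rw [parts] at this; linarith
    have hG : ∀ x ∈ Icc p q, 0 ≤ G x := fun x hx =>
      intervalIntegral.integral_nonneg hτ.le fun t ht => mul_nonneg (hepos t).le (hF t ht x hx)
    have hG2 : ∀ x ∈ Icc x1 (x1 + 4 * d), c' / s ≤ G x := by
      intro x hx
      have h1 : (∫ t in (0:ℝ)..τ, e t * c) ≤ G x :=
        intervalIntegral.integral_mono_on hτ.le (ie.mul_const c) (iG x) fun t ht =>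
          mul_le_mul_of_nonneg_left (hF2 t ht x hx) (hepos t).le
      rw [intervalIntegral.integral_mul_const, he, int_exp hspos] at h1
      refine le_trans ?_ h1
      have : Real.exp (-s * τ) ≤ Real.exp (-τ) := Real.exp_le_exp.2 (by nlinarith)
      rw [hc', div_mul_eq_mul_div, mul_comm c]
      gcongr
    have hvb : ∀ x ∈ Icc p q, |v x| ≤ C0 / s := by
      intro x hx
      have h1 : ‖v x‖ ≤ ∫ t in (0:ℝ)..τ, e t * C0 := by
        apply intervalIntegral.norm_integral_le_of_norm_le hτ.le _ (ie.mul_const C0)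
        refine Eventually.of_forall fun t ht => ?_
        rw [norm_mul, Real.norm_of_nonneg (hepos t).le]
        exact mul_le_mul_of_nonneg_left (hCC t (Ioc_subset_Icc_self ht) x hx) (hepos t).le
      rw [intervalIntegral.integral_mul_const, he, int_exp hspos] at h1
      refine h1.trans ?_
      rw [div_mul_eq_mul_div]
      have := Real.exp_pos (-s * τ)
      gcongr
      nlinarith
    -- barrier
    set κ := e τ with hκ
    have hκpos : 0 < κ := hepos τ
    set E : ℝ → ℝ := fun x => Real.exp (A * n * (x - p)) with hE
    have dE : ∀ x, HasDerivAt E (A * n * E x) x := fun x => hasDerivAt_exp_lin2 (A * n) p x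
    set y : ℝ → ℝ := fun x => - v x + C0 * κ * E x with hy
    set y1 : ℝ → ℝ := fun x => - v1 x + C0 * κ * (A * n * E x) with hy1
    set y2 : ℝ → ℝ := fun x => - v2 x + C0 * κ * (A * n * (A * n * E x)) with hy2
    have dy : ∀ x, HasDerivAt y (y1 x) x := fun x => (dv x).neg.add ((dE x).const_mul _)
    have dy1 : ∀ x, HasDerivAt y1 (y2 x) x := fun x =>
      (dv1 x).neg.add (((dE x).const_mul _).const_mul _)
    have hEp : E p = 1 := by simp [hE]
    have hvp : v p = 0 := by
      simp only [hv]
      rw [intervalIntegral.integral_congr (g := fun _ => 0)]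
      · simp
      · intro t ht; rw [uIcc_of_le hτ.le] at ht; simp [hWp t ht]
    have hv1p : v1 p = 0 := by
      simp only [hv1]
      rw [intervalIntegral.integral_congr (g := fun _ => 0)]
      · simp
      · intro t ht; rw [uIcc_of_le hτ.le] at ht; simp [hWxp t ht]
    have ineq : ∀ x ∈ Icc p q, s * y x + G x ≤ 1 / 2 * σ x ^ 2 * y2 x + b x * y1 x := by
      intro x hx
      have hE1 : 1 ≤ E x := Real.one_le_exp (mul_nonneg (by positivity) (by linarith [hx.1]))
      have h1 : s ≤ 1 / 2 * σ x ^ 2 * (A * n) ^ 2 + b x * (A * n) - s := by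
        have hb1 : -B ≤ b x := (abs_le.1 (hB x hx)).1
        have hsq : σ0 ^ 2 ≤ σ x ^ 2 := pow_le_pow_left₀ hσ0pos.le (hσmin x hx) 2
        have h2 : 1 / 2 * σ0 ^ 2 * (A * n) ^ 2 ≤ 1 / 2 * σ x ^ 2 * (A * n) ^ 2 := by gcongr
        have h3 : -B * (A * n) ≤ b x * (A * n) := by gcongr
        have h4 : B * (A * n) ≤ B * (A * s) := by
          have : n ≤ s := by rw [hs]; nlinarith
          gcongr
        have h5 : (B + 2) * (A * s) ≤ 1 / 2 * σ0 ^ 2 * A * (A * s) := by gcongr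
        have h6 : 1 / 2 * σ0 ^ 2 * (A * n) ^ 2 = 1 / 2 * σ0 ^ 2 * A * (A * s) := by rw [hs]; ring
        have h7 : s ≤ A * s := by nlinarith
        nlinarith
      have hWb := abs_le.1 (hCC τ ⟨hτ.le, le_rfl⟩ x hx)
      have h8 : κ * W τ x ≤ C0 * κ * E x * (1 / 2 * σ x ^ 2 * (A * n) ^ 2 + b x * (A * n) - s) := by
        calc κ * W τ x ≤ κ * C0 := by gcongr; exact hWb.2
          _ = C0 * κ * 1 * 1 := by ring
          _ ≤ _ := by gcongr; linarith
      have := ode x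
      have e1 : 1 / 2 * σ x ^ 2 * y2 x + b x * y1 x - s * y x =
        - (1 / 2 * σ x ^ 2 * v2 x + b x * v1 x) + s * v x +
          C0 * κ * E x * (1 / 2 * σ x ^ 2 * (A * n) ^ 2 + b x * (A * n) - s) := by
        simp only [hy, hy1, hy2]; ring
      linarith
    have fin := ode_growth (p := p) (q := q) (x1 := x1) (x2 := x1 + 4 * d) (R := R) (m := m) (s := s)
      (c := c') (d := d) (y := y) (P := fun x => ρ x * y1 x)
      (P' := fun x => ρ x * (2 * b x / σ x ^ 2) * y1 x + ρ x * y2 x) (ρ := ρ) (G := G)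
      hx1 hd rfl hx2 hmpos hspos hc'pos hρ hR'
      (fun x => by
        have : ρ x * y1 x / ρ x = y1 x := by have := (hρ x).ne'; field_simp
        rw [this]; exact dy x)
      (fun x => (dρ x).mul (dy1 x))
      (fun x hx hyx => by
        have h1 := hG x hx
        have h2 : 0 ≤ s * y x + G x := by positivity
        have h3 := hσpos x
        have h4 := hρ x
        calc m * (s * y x + G x) ≤ 2 * ρ x / σ x ^ 2 * (s * y x + G x) := by
              gcongr; exact hmle x hx
          _ ≤ 2 * ρ x / σ x ^ 2 * (1 / 2 * σ x ^ 2 * y2 x + b x * y1 x) := by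
              exact mul_le_mul_of_nonneg_left (ineq x hx) (by positivity)
          _ = _ := by field_simp; ring)
      hG hG2
      (by simp only [hy, hvp, hEp]; have := mul_pos hC0 hκpos; linarith)
      (by
        simp only [hy1, hv1p, hEp]
        have := hρ p
        have : 0 ≤ C0 * κ * (A * n * 1) := by positivity
        apply mul_nonneg (hρ p).le; linarith)
    refine fin.trans ?_
    have h1 := abs_le.1 (hvb (x1 + 4 * d) ⟨by linarith, hx2⟩)
    simp only [hy]
    have : C0 * κ * E (x1 + 4 * d) = C0 * (Real.exp (-s * τ) * Real.exp (A * n * (x1 + 4 * d - p))) := by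
      simp only [hκ, hE, he]; ring
    rw [this]
    linarith [h1.1]
  have hK : 0 < m ^ 2 * c' * d ^ 4 / R ^ 2 := by positivity
  have := ge_of_tendsto (tendsto_aux (C := C0) (A := A) (L := x1 + 4 * d - p) hτ)
    (by filter_upwards [eventually_ge_atTop 1] with n hn using main n hn)
  linarith

lemma right_germ {ψ : ℝ → ℝ} (h : ClassM ψ) (x0 : ℝ) :
    ∃ g : ℝ → ℝ, AnalyticAt ℝ g x0 ∧ ∀ᶠ x in nhdsWithin x0 (Ici x0), ψ x = g x := by
  obtain ⟨-, δ, κ, φ, hδ, hmono, hbot, htop, hgap, hφ, hψ⟩ := h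
  obtain ⟨N, hN⟩ := (htop.eventually_gt_atTop x0).exists
  obtain ⟨j0, hj0⟩ := (hbot.eventually_le_atBot x0).exists
  obtain ⟨j, hj, hjmax⟩ := Int.exists_greatest_of_bdd (P := fun j => κ j ≤ x0)
    ⟨N, fun z hz => by by_contra! hlt; linarith [hmono hlt]⟩ ⟨j0, hj0⟩
  have hj1 : x0 < κ (j + 1) := by
    by_contra! hle
    have := hjmax _ hle
    omega
  obtain ⟨g, -, hg, hga⟩ := (hφ j x0 ⟨hj, hj1.le⟩).exists_analyticAt
  refine ⟨g, hga, ?_⟩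
  filter_upwards [Ico_mem_nhdsGE hj1] with x hx
  have hx' : x ∈ Ico (κ j) (κ (j + 1)) := ⟨hj.trans hx.1, hx.2⟩
  rw [hψ j x hx', hg (mem_insert_of_mem _ (Ico_subset_Icc_self hx'))]

lemma left_germ {ψ : ℝ → ℝ} (h : ClassM ψ) (x0 : ℝ) :
    ∃ g : ℝ → ℝ, AnalyticAt ℝ g x0 ∧ ∀ᶠ x in nhdsWithin x0 (Iic x0), ψ x = g x := by
  obtain ⟨⟨K, hK⟩, δ, κ, φ, hδ, hmono, hbot, htop, hgap, hφ, hψ⟩ := h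
  obtain ⟨N, hN⟩ := (htop.eventually_gt_atTop x0).exists
  obtain ⟨j0, hj0⟩ := (hbot.eventually_lt_atBot x0).exists
  obtain ⟨j, hj, hjmax⟩ := Int.exists_greatest_of_bdd (P := fun j => κ j < x0)
    ⟨N, fun z hz => by by_contra! hlt; linarith [hmono hlt]⟩ ⟨j0, hj0⟩
  have hj1 : x0 ≤ κ (j + 1) := by
    by_contra! hle
    have := hjmax _ hle
    omega
  have hlt : κ j < κ (j + 1) := hmono (by omega)
  have heq : EqOn ψ (φ j) (Icc (κ j) (κ (j + 1))) := by
    apply EqOn.of_subset_closure (s := Ico (κ j) (κ (j + 1))) (hψ j) hK.continuous.continuousOn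
      (hφ j).continuousOn Ico_subset_Icc_self
    rw [closure_Ico hlt.ne]
  obtain ⟨g, -, hg, hga⟩ := (hφ j x0 ⟨hj.le, hj1⟩).exists_analyticAt
  refine ⟨g, hga, ?_⟩
  filter_upwards [Ioc_mem_nhdsLE hj] with x hx
  have hx' : x ∈ Icc (κ j) (κ (j + 1)) := ⟨hx.1.le, hx.2.trans hj1⟩
  rw [heq hx', hg (mem_insert_of_mem _ hx')]

lemma factor {α β : ℝ → ℝ} {x0 : ℝ} (hα : AnalyticAt ℝ α x0) (hβ : AnalyticAt ℝ β x0)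
    (hne : ¬ ((∀ᶠ x in nhds x0, α x = 0) ∧ (∀ᶠ x in nhds x0, β x = 0))) :
    ∃ (k : ℕ) (α1 β1 : ℝ → ℝ), ContinuousAt α1 x0 ∧ ContinuousAt β1 x0 ∧
      (α1 x0 ≠ 0 ∨ β1 x0 ≠ 0) ∧
      ∀ᶠ x in nhds x0, α x = (x - x0) ^ k * α1 x ∧ β x = (x - x0) ^ k * β1 x := by
  by_cases h1 : ∀ᶠ x in nhds x0, α x = 0
  · have h2 : ¬ ∀ᶠ x in nhds x0, β x = 0 := fun h => hne ⟨h1, h⟩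
    obtain ⟨k, g, hg, hg0, he⟩ := hβ.exists_eventuallyEq_pow_smul_nonzero_iff.2 h2
    refine ⟨k, fun _ => 0, g, continuousAt_const, hg.continuousAt, Or.inr hg0, ?_⟩
    filter_upwards [h1, he] with x ha hb
    simp [ha, hb]
  · obtain ⟨k, g, hg, hg0, he⟩ := hα.exists_eventuallyEq_pow_smul_nonzero_iff.2 h1
    by_cases h2 : ∀ᶠ x in nhds x0, β x = 0
    · refine ⟨k, g, fun _ => 0, hg.continuousAt, continuousAt_const, Or.inl hg0, ?_⟩
      filter_upwards [h2, he] with x ha hb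
      simp [ha, hb]
    · obtain ⟨l, g', hg', hg0', he'⟩ := hβ.exists_eventuallyEq_pow_smul_nonzero_iff.2 h2
      rcases le_total k l with hkl | hkl
      · obtain ⟨i, rfl⟩ := Nat.exists_eq_add_of_le hkl
        refine ⟨k, g, fun x => (x - x0) ^ i * g' x, hg.continuousAt, ?_, Or.inl hg0, ?_⟩
        · have := hg'.continuousAt; fun_prop
        · filter_upwards [he, he'] with x ha hb
          simp only [ha, hb, smul_eq_mul, true_and]; ring
      · obtain ⟨i, rfl⟩ := Nat.exists_eq_add_of_le hkl
        refine ⟨l, fun x => (x - x0) ^ i * g x, g', ?_, hg'.continuousAt, Or.inr hg0', ?_⟩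
        · have := hg.continuousAt; fun_prop
        · filter_upwards [he, he'] with x ha hb
          simp only [ha, hb, smul_eq_mul, and_true]; ring

lemma no_jump {T ε p x0 : ℝ} {b bt σ σt f : ℝ → ℝ} {u ut : ℝ → ℝ → ℝ}
    (hε : 0 < ε) (hεT : ε < T) (hb : Continuous b) (hσ : Continuous σ) (hσpos : ∀ x, 0 < σ x)
    (hu : IsClassicalSolution T b σ f u) (hut : IsClassicalSolution T bt σt f ut)
    (heq : ∀ t ∈ Ico 0 ε, ∀ᶠ x in nhds p, u t x = ut t x) (hpx : p ≤ x0)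
    (hbe : ∀ x ∈ Icc p x0, b x = bt x ∧ σ x = σt x)
    {k : ℕ} {α1 β1 : ℝ → ℝ} (hα1 : ContinuousAt α1 x0) (hβ1 : ContinuousAt β1 x0)
    (hfac : ∀ᶠ x in nhdsWithin x0 (Ici x0), 1 / 2 * (σ x ^ 2 - σt x ^ 2) = (x - x0) ^ k * α1 x ∧
      b x - bt x = (x - x0) ^ k * β1 x)
    (hne : β1 x0 * deriv (fun y => ut 0 y) x0 + α1 x0 * deriv (deriv (fun y => ut 0 y)) x0 ≠ 0) :
    False := by
  obtain ⟨u1, u2, u3, u4, u5, u6, u7, u8, u9⟩ := hu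
  obtain ⟨v1, v2, v3, v4, v5, v6, v7, v8, v9⟩ := hut
  set r0 := β1 x0 * deriv (fun y => ut 0 y) x0 + α1 x0 * deriv (deriv (fun y => ut 0 y)) x0 with hr0
  set Br : ℝ × ℝ → ℝ := fun z => r0 * (β1 z.2 * deriv (fun y => ut z.1 y) z.2
    + α1 z.2 * deriv (deriv (fun y => ut z.1 y)) z.2) with hBr
  have hT0 : (0:ℝ) ∈ Ico 0 T := ⟨le_rfl, by linarith⟩
  have hz : ((0:ℝ), x0) ∈ Ico (0:ℝ) T ×ˢ (univ : Set ℝ) := ⟨hT0, mem_univ _⟩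
  have cBr : ContinuousWithinAt Br (Ico 0 T ×ˢ univ) (0, x0) := by
    have a1 : ContinuousWithinAt (fun z : ℝ × ℝ => α1 z.2) (Ico 0 T ×ˢ univ) (0, x0) :=
      (ContinuousAt.comp (f := fun z : ℝ × ℝ => z.2) (x := ((0:ℝ), x0)) hα1 continuousAt_snd).continuousWithinAt
    have a2 : ContinuousWithinAt (fun z : ℝ × ℝ => β1 z.2) (Ico 0 T ×ˢ univ) (0, x0) :=
      (ContinuousAt.comp (f := fun z : ℝ × ℝ => z.2) (x := ((0:ℝ), x0)) hβ1 continuousAt_snd).continuousWithinAt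
    exact ((a2.mul (v6 _ hz)).add (a1.mul (v7 _ hz))).const_smul r0
  have hpos : r0 ^ 2 / 2 < Br (0, x0) := by
    have : Br (0, x0) = r0 ^ 2 := by simp only [hBr]; rw [← hr0]; ring
    rw [this]
    have : 0 < r0 ^ 2 := by positivity
    linarith
  have hev := cBr.eventually (lt_mem_nhds hpos)
  obtain ⟨η1, hη1, hB1⟩ := Metric.mem_nhdsWithin_iff.1 hev
  obtain ⟨η2, hη2, hB2⟩ := Metric.mem_nhdsWithin_iff.1 hfac
  set η := min η1 η2 with hη
  have hηpos : 0 < η := lt_min hη1 hη2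
  have hη_1 : η ≤ η1 := min_le_left _ _
  have hη_2 : η ≤ η2 := min_le_right _ _
  set r := η / 2 with hr
  set τ := min η ε / 2 with hτ
  have hmin : 0 < min η ε := lt_min hηpos hε
  have hτpos : 0 < τ := by positivity
  have hτη : τ < η := by have := min_le_left η ε; rw [hτ]; linarith
  have hτε : τ < ε := by have := min_le_right η ε; rw [hτ]; linarith
  have hrpos : 0 < r := by positivity
  have hIcc : ∀ t ∈ Icc 0 τ, t ∈ Ico 0 T := fun t ht => ⟨ht.1, by linarith [ht.2]⟩
  have hsub : Icc 0 τ ×ˢ (univ : Set ℝ) ⊆ Ico 0 T ×ˢ univ := prod_mono hIcc le_rfl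
  have hBrpos : ∀ t ∈ Icc 0 τ, ∀ x ∈ Icc x0 (x0 + r), r0 ^ 2 / 2 < Br (t, x) := by
    intro t ht x hx
    apply hB1
    refine ⟨?_, hIcc t ht, mem_univ _⟩
    rw [Metric.mem_ball, Prod.dist_eq, max_lt_iff, Real.dist_eq, Real.dist_eq]
    simp only
    rw [abs_of_nonneg (by linarith [ht.1]), abs_of_nonneg (by linarith [hx.1])]
    constructor <;> linarith [ht.2, hx.2]
  have hfac' : ∀ x ∈ Icc x0 (x0 + r), 1 / 2 * (σ x ^ 2 - σt x ^ 2) = (x - x0) ^ k * α1 x ∧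
      b x - bt x = (x - x0) ^ k * β1 x := by
    intro x hx
    apply hB2
    refine ⟨?_, hx.1⟩
    rw [Metric.mem_ball, Real.dist_eq, abs_of_nonneg (by linarith [hx.1])]
    linarith [hx.2]
  set F : ℝ → ℝ → ℝ := fun t x => r0 * ((b x - bt x) * deriv (fun y => ut t y) x +
    1 / 2 * (σ x ^ 2 - σt x ^ 2) * deriv (deriv (fun y => ut t y)) x) with hF
  have hFeq : ∀ t ∈ Icc 0 τ, ∀ x,
      r0 * (deriv (fun s => u s x) t - deriv (fun s => ut s x) t) -
        (1 / 2 * σ x ^ 2 * (r0 * (deriv (deriv (fun y => u t y)) x - deriv (deriv (fun y => ut t y)) x))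
          + b x * (r0 * (deriv (fun y => u t y) x - deriv (fun y => ut t y) x))) = F t x := by
    intro t ht x
    rw [u8 t (hIcc t ht) x, v8 t (hIcc t ht) x]
    simp only [hF]; ring
  have hF1 : ∀ t ∈ Icc 0 τ, ∀ x ∈ Icc x0 (x0 + r), F t x = (x - x0) ^ k * Br (t, x) := by
    intro t ht x hx
    obtain ⟨e1, e2⟩ := hfac' x hx
    simp only [hF, hBr]
    rw [e1, e2]; ring
  refine core_s2 (τ := τ) (p := p) (q := x0 + r) (x1 := x0 + r / 2) (d := r / 8)
    (c := (r / 2) ^ k * (r0 ^ 2 / 2)) hτpos hb hσ hσpos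
    (W := fun t x => r0 * (u t x - ut t x))
    (Wt := fun t x => r0 * (deriv (fun s => u s x) t - deriv (fun s => ut s x) t))
    (Wx := fun t x => r0 * (deriv (fun y => u t y) x - deriv (fun y => ut t y) x))
    (Wxx := fun t x => r0 * (deriv (deriv (fun y => u t y)) x - deriv (deriv (fun y => ut t y)) x))
    (((u1.sub v1).const_smul r0).mono hsub) (((u5.sub v5).const_smul r0).mono hsub)
    (((u6.sub v6).const_smul r0).mono hsub) (((u7.sub v7).const_smul r0).mono hsub)
    (fun t ht x => ((u2 t (hIcc t ht) x).hasDerivAt.sub (v2 t (hIcc t ht) x).hasDerivAt).const_mul r0)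
    (fun t ht x => ((u3 t (hIcc t ht) x).hasDerivAt.sub (v3 t (hIcc t ht) x).hasDerivAt).const_mul r0)
    (fun t ht x => ((u4 t (hIcc t ht) x).hasDerivAt.sub (v4 t (hIcc t ht) x).hasDerivAt).const_mul r0)
    (fun x => by simp [u9, v9])
    (fun t ht => by
      have := (heq t ⟨ht.1, by linarith [ht.2]⟩).self_of_nhds
      simp [this])
    (fun t ht => by
      have : deriv (fun y => u t y) p = deriv (fun y => ut t y) p :=
        EventuallyEq.deriv_eq (heq t ⟨ht.1, by linarith [ht.2]⟩)
      simp only [this]; simp)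
    (by linarith) (by positivity) (by linarith) (by positivity) ?_ ?_
  · intro t ht x hx
    rw [hFeq t ht x]
    rcases le_total x x0 with h | h
    · obtain ⟨e1, e2⟩ := hbe x ⟨hx.1, h⟩
      simp [hF, e1, e2]
    · rw [hF1 t ht x ⟨h, hx.2⟩]
      have := hBrpos t ht x ⟨h, hx.2⟩
      have h2 : 0 ≤ x - x0 := by linarith
      have : 0 ≤ Br (t, x) := by nlinarith [sq_nonneg r0]
      positivity
  · intro t ht x hx
    have hx' : x ∈ Icc x0 (x0 + r) := ⟨by linarith [hx.1], by linarith [hx.2]⟩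
    rw [hFeq t ht x, hF1 t ht x hx']
    have := hBrpos t ht x hx'
    have h2 : r / 2 ≤ x - x0 := by linarith [hx.1]
    have h3 : 0 ≤ x - x0 := by linarith
    gcongr

lemma right_ext_s2 {T ε p : ℝ} {b bt σ σt : ℝ → ℝ} {u₁ u₂ ut₁ ut₂ : ℝ → ℝ → ℝ}
    (hε : 0 < ε) (hεT : ε < T) (hb : Continuous b) (hbt : Continuous bt) (hσ : Continuous σ)
    (hσt : Continuous σt) (hσpos : ∀ x, 0 < σ x) (hσtpos : ∀ x, 0 < σt x)
    (gb : ∀ x0, ∃ g : ℝ → ℝ, AnalyticAt ℝ g x0 ∧ ∀ᶠ x in nhdsWithin x0 (Ici x0), b x = g x)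
    (gbt : ∀ x0, ∃ g : ℝ → ℝ, AnalyticAt ℝ g x0 ∧ ∀ᶠ x in nhdsWithin x0 (Ici x0), bt x = g x)
    (gσ : ∀ x0, ∃ g : ℝ → ℝ, AnalyticAt ℝ g x0 ∧ ∀ᶠ x in nhdsWithin x0 (Ici x0), σ x = g x)
    (gσt : ∀ x0, ∃ g : ℝ → ℝ, AnalyticAt ℝ g x0 ∧ ∀ᶠ x in nhdsWithin x0 (Ici x0), σt x = g x)
    (hu₁ : IsClassicalSolution T b σ (fun x => x ^ 1) u₁)
    (hu₂ : IsClassicalSolution T b σ (fun x => x ^ 2) u₂)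
    (hut₁ : IsClassicalSolution T bt σt (fun x => x ^ 1) ut₁)
    (hut₂ : IsClassicalSolution T bt σt (fun x => x ^ 2) ut₂)
    (heq₁ : ∀ t ∈ Ico 0 ε, ∀ᶠ x in nhds p, u₁ t x = ut₁ t x)
    (heq₂ : ∀ t ∈ Ico 0 ε, ∀ᶠ x in nhds p, u₂ t x = ut₂ t x)
    (hp : b p = bt p ∧ σ p = σt p) :
    ∀ x, p ≤ x → b x = bt x ∧ σ x = σt x := by
  by_contra! hcon
  obtain ⟨w, hpw, hw⟩ := hcon
  set S : Set ℝ := {x | p ≤ x ∧ ¬ (b x = bt x ∧ σ x = σt x)} with hS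
  have hwS : w ∈ S := ⟨hpw, fun h => hw h.1 h.2⟩
  have hbdd : BddBelow S := ⟨p, fun x hx => hx.1⟩
  set x0 := sInf S with hx0
  have hpx0 : p ≤ x0 := le_csInf ⟨w, hwS⟩ fun x hx => hx.1
  have hlt : ∀ x ∈ Ico p x0, b x = bt x ∧ σ x = σt x := by
    intro x hx
    by_contra h
    have := csInf_le hbdd (show x ∈ S from ⟨hx.1, h⟩)
    linarith [hx.2]
  have hbe : ∀ x ∈ Icc p x0, b x = bt x ∧ σ x = σt x := by
    rcases hpx0.eq_or_lt with h | h
    · intro x hx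
      rw [← h] at hx
      have : x = p := le_antisymm hx.2 hx.1
      rw [this]; exact hp
    · have hcl : IsClosed {x | b x = bt x ∧ σ x = σt x} :=
        (isClosed_eq hb hbt).inter (isClosed_eq hσ hσt)
      have := closure_minimal hlt hcl
      rwa [closure_Ico h.ne] at this
  obtain ⟨g1, ag1, eg1⟩ := gb x0
  obtain ⟨g2, ag2, eg2⟩ := gbt x0
  obtain ⟨g3, ag3, eg3⟩ := gσ x0
  obtain ⟨g4, ag4, eg4⟩ := gσt x0
  have aα : AnalyticAt ℝ (fun x => 1 / 2 * (g3 x ^ 2 - g4 x ^ 2)) x0 := by fun_prop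
  have aβ : AnalyticAt ℝ (fun x => g1 x - g2 x) x0 := by fun_prop
  obtain ⟨k, α1, β1, hα1, hβ1, hor, hfac⟩ := factor aα aβ (by
    rintro ⟨h1, h2⟩
    have h3 : ∀ᶠ x in nhdsWithin x0 (Ici x0), b x = bt x ∧ σ x = σt x := by
      filter_upwards [eg1, eg2, eg3, eg4, nhdsWithin_le_nhds h1, nhdsWithin_le_nhds h2]
        with x e1 e2 e3 e4 e5 e6
      rw [e1, e2]
      refine ⟨by linarith, ?_⟩
      rw [← e3, ← e4] at e5
      have h1 := hσpos x
      have h2 := hσtpos x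
      have : σ x ^ 2 = σt x ^ 2 := by linarith
      exact (pow_left_inj₀ h1.le h2.le (by norm_num)).1 this
    obtain ⟨y, hy, hy2⟩ := mem_nhdsGE_iff_exists_Ico_subset.1 h3
    obtain ⟨z, hz, hzy⟩ := exists_lt_of_csInf_lt ⟨w, hwS⟩ (show sInf S < y from hy)
    exact hz.2 (hy2 ⟨csInf_le hbdd hz, hzy⟩))
  have hfac' : ∀ᶠ x in nhdsWithin x0 (Ici x0), 1 / 2 * (σ x ^ 2 - σt x ^ 2) = (x - x0) ^ k * α1 x ∧
      b x - bt x = (x - x0) ^ k * β1 x := by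
    filter_upwards [eg1, eg2, eg3, eg4, nhdsWithin_le_nhds hfac] with x e1 e2 e3 e4 e5
    rw [e1, e2, e3, e4]; exact e5
  have i1 : (fun y => ut₁ 0 y) = fun y => y ^ 1 := funext hut₁.2.2.2.2.2.2.2.2
  have i2 : (fun y => ut₂ 0 y) = fun y => y ^ 2 := funext hut₂.2.2.2.2.2.2.2.2
  have d2 : deriv (fun y : ℝ => y ^ 2) = fun y => 2 * y := by ext y; simp
  by_cases hβ0 : β1 x0 = 0
  · have hα0 : α1 x0 ≠ 0 := by tauto
    refine no_jump hε hεT hb hσ hσpos hu₂ hut₂ heq₂ hpx0 hbe hα1 hβ1 hfac' ?_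
    rw [i2, d2, hβ0]
    have : deriv (fun y : ℝ => 2 * y) x0 = 2 := by
      simpa using ((hasDerivAt_id x0).const_mul (2:ℝ)).deriv
    rw [this]; simpa using hα0
  · refine no_jump hε hεT hb hσ hσpos hu₁ hut₁ heq₁ hpx0 hbe hα1 hβ1 hfac' ?_
    rw [i1]
    simpa using hβ0

lemma refl_sol {T : ℝ} {b σ f : ℝ → ℝ} {u : ℝ → ℝ → ℝ} (c : ℝ)
    (h : IsClassicalSolution T b σ f u) :
    IsClassicalSolution T (fun x => - b (-x)) (fun x => σ (-x)) (fun x => c * f (-x))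
      (fun t x => c * u t (-x)) := by
  obtain ⟨u1, u2, u3, u4, u5, u6, u7, u8, u9⟩ := h
  have D1 : ∀ t, deriv (fun y => c * u t (-y)) = fun x => - c * deriv (fun y => u t y) (-x) := by
    intro t; ext x
    rw [deriv_const_mul_field, deriv_comp_neg (fun y => u t y)]; ring
  have D2 : ∀ t x, deriv (fun x => - c * deriv (fun y => u t y) (-x)) x =
      c * deriv (deriv (fun y => u t y)) (-x) := by
    intro t x
    rw [deriv_const_mul_field, deriv_comp_neg (deriv (fun y => u t y))]; ring
  have D3 : ∀ t x, deriv (fun s => c * u s (-x)) t = c * deriv (fun s => u s (-x)) t := by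
    intro t x
    rw [deriv_const_mul_field]
  have cn : Continuous fun z : ℝ × ℝ => (z.1, -z.2) := by fun_prop
  have mp : MapsTo (fun z : ℝ × ℝ => (z.1, -z.2)) (Ico 0 T ×ˢ univ) (Ico 0 T ×ˢ univ) :=
    fun z hz => ⟨hz.1, mem_univ _⟩
  have cc : ∀ {h : ℝ → ℝ → ℝ} (c : ℝ), ContinuousOn (fun z : ℝ × ℝ => h z.1 z.2) (Ico 0 T ×ˢ univ) →
      ContinuousOn (fun z : ℝ × ℝ => c * h z.1 (-z.2)) (Ico 0 T ×ˢ univ) := fun c hh =>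
    continuousOn_const.mul (hh.comp cn.continuousOn mp)
  refine ⟨cc c u1, fun t ht x => (u2 t ht (-x)).const_mul c, fun t ht x => ?_, fun t ht x => ?_,
    ?_, ?_, ?_, fun t ht x => ?_, fun x => ?_⟩
  · exact ((u3 t ht (-x)).comp x differentiableAt_id.neg).const_mul c
  · rw [D1]
    exact ((u4 t ht (-x)).comp x differentiableAt_id.neg).const_mul (-c)
  · simp only [D3]; exact cc (h := fun t x => deriv (fun s => u s x) t) c u5
  · simp only [D1]; exact cc (h := fun t x => deriv (fun y => u t y) x) (-c) u6
  · simp only [D1, D2]; exact cc (h := fun t x => deriv (deriv (fun y => u t y)) x) c u7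
  · simp only [D1, D2, D3]; rw [u8 t ht (-x)]; ring
  · simp only [u9]

lemma refl_germ {ψ : ℝ → ℝ}
    (h : ∀ x0, ∃ g : ℝ → ℝ, AnalyticAt ℝ g x0 ∧ ∀ᶠ x in nhdsWithin x0 (Iic x0), ψ x = g x) (x0 : ℝ) :
    ∃ g : ℝ → ℝ, AnalyticAt ℝ g x0 ∧ ∀ᶠ x in nhdsWithin x0 (Ici x0), ψ (-x) = g x := by
  obtain ⟨g, hg, he⟩ := h (-x0)
  refine ⟨fun x => g (-x), ?_, ?_⟩
  · exact AnalyticAt.comp (f := fun x : ℝ => -x) (x := x0) hg (analyticAt_id.neg)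
  · have : Tendsto (fun x : ℝ => -x) (nhdsWithin x0 (Ici x0)) (nhdsWithin (-x0) (Iic (-x0))) := by
      apply tendsto_nhdsWithin_of_tendsto_nhds_of_eventually_within
      · exact (continuous_neg.tendsto x0).mono_left nhdsWithin_le_nhds
      · filter_upwards [self_mem_nhdsWithin] with x hx
        simpa using hx
    exact this.eventually he

lemma base_eq {T ε p : ℝ} {b bt σ σt f : ℝ → ℝ} {u ut : ℝ → ℝ → ℝ}
    (hε : 0 < ε) (hεT : ε < T)
    (hu : IsClassicalSolution T b σ f u) (hut : IsClassicalSolution T bt σt f ut)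
    (heq : ∀ t ∈ Ico 0 ε, u t p = ut t p) :
    1 / 2 * σ p ^ 2 * deriv (deriv f) p + b p * deriv f p =
      1 / 2 * σt p ^ 2 * deriv (deriv f) p + bt p * deriv f p := by
  have h0 : (0:ℝ) ∈ Ico 0 T := ⟨le_rfl, by linarith⟩
  have e1 : (fun y => u 0 y) = f := funext hu.2.2.2.2.2.2.2.2
  have e2 : (fun y => ut 0 y) = f := funext hut.2.2.2.2.2.2.2.2
  have p1 := hu.2.2.2.2.2.2.2.1 0 h0 p
  have p2 := hut.2.2.2.2.2.2.2.1 0 h0 p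
  rw [e1] at p1
  rw [e2] at p2
  rw [← p1, ← p2]
  have a1 := (hu.2.1 0 h0 p).hasDerivAt.hasDerivWithinAt (s := Ico 0 ε)
  have a2 := (hut.2.1 0 h0 p).hasDerivAt.hasDerivWithinAt (s := Ico 0 ε)
  have a3 := a2.congr (f₁ := fun s => u s p) heq (heq 0 ⟨le_rfl, hε⟩)
  exact (uniqueDiffOn_Ico 0 ε 0 ⟨le_rfl, hε⟩).eq_deriv _ a1 a3

/-- Theorem 3: both drift and diffusion coefficients are uniquely determined by
observation of the first and second moments on a small time-space cylinder. -/
theorem drift_diffusion_uniqueness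
    (T : ℝ) (hT : 0 < T)
    (b bt sigma sigmat : ℝ → ℝ)
    (hb : ClassM b) (hbt : ClassM bt)
    (hs : ClassM sigma) (hst : ClassM sigmat)
    (hspos : ∀ x, 0 < sigma x) (hstpos : ∀ x, 0 < sigmat x)
    (u₁ u₂ ut₁ ut₂ : ℝ → ℝ → ℝ)
    (hu₁ : IsClassicalSolution T b sigma (fun x => x ^ 1) u₁)
    (hu₂ : IsClassicalSolution T b sigma (fun x => x ^ 2) u₂)
    (hut₁ : IsClassicalSolution T bt sigmat (fun x => x ^ 1) ut₁)
    (hut₂ : IsClassicalSolution T bt sigmat (fun x => x ^ 2) ut₂)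
    (ε : ℝ) (hε : ε ∈ Ioo 0 T)
    (ω : Set ℝ) (hω : IsOpen ω) (hωne : ω.Nonempty)
    (hobs₁ : ∀ t ∈ Ioo 0 ε, ∀ x ∈ ω, u₁ t x = ut₁ t x)
    (hobs₂ : ∀ t ∈ Ioo 0 ε, ∀ x ∈ ω, u₂ t x = ut₂ t x) :
    ∀ x : ℝ, b x = bt x ∧ sigma x = sigmat x := by
  obtain ⟨hε0, hεT⟩ := hε
  obtain ⟨p, hpω⟩ := hωne
  have cont : ∀ {ψ : ℝ → ℝ}, ClassM ψ → Continuous ψ := fun h => h.1.choose_spec.continuous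
  have h1 : ∀ t ∈ Ico 0 ε, ∀ x ∈ ω, u₁ t x = ut₁ t x := by
    intro t ht x hx
    rcases ht.1.eq_or_lt with h | h
    · rw [← h, hu₁.2.2.2.2.2.2.2.2, hut₁.2.2.2.2.2.2.2.2]
    · exact hobs₁ t ⟨h, ht.2⟩ x hx
  have h2 : ∀ t ∈ Ico 0 ε, ∀ x ∈ ω, u₂ t x = ut₂ t x := by
    intro t ht x hx
    rcases ht.1.eq_or_lt with h | h
    · rw [← h, hu₂.2.2.2.2.2.2.2.2, hut₂.2.2.2.2.2.2.2.2]
    · exact hobs₂ t ⟨h, ht.2⟩ x hx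
  have hnω : ω ∈ nhds p := hω.mem_nhds hpω
  have n1 : ∀ t ∈ Ico 0 ε, ∀ᶠ x in nhds p, u₁ t x = ut₁ t x := fun t ht => by
    filter_upwards [hnω] with x hx using h1 t ht x hx
  have n2 : ∀ t ∈ Ico 0 ε, ∀ᶠ x in nhds p, u₂ t x = ut₂ t x := fun t ht => by
    filter_upwards [hnω] with x hx using h2 t ht x hx
  have hp : b p = bt p ∧ sigma p = sigmat p := by
    have b1 := base_eq hε0 hεT hu₁ hut₁ (fun t ht => h1 t ht p hpω)
    have b2 := base_eq hε0 hεT hu₂ hut₂ (fun t ht => h2 t ht p hpω)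
    have d1 : deriv (fun y : ℝ => y ^ 1) = fun y => 1 := by ext y; simp
    have d2 : deriv (fun y : ℝ => y ^ 2) = fun y => 2 * y := by ext y; simp
    have d3 : deriv (fun y : ℝ => 2 * y) p = 2 := by
      simpa using ((hasDerivAt_id p).const_mul (2:ℝ)).deriv
    rw [d1] at b1
    rw [d2, d3] at b2
    simp at b1
    refine ⟨b1, ?_⟩
    rw [b1] at b2
    exact (pow_left_inj₀ (hspos p).le (hstpos p).le (by norm_num : 2 ≠ 0)).1 (by linarith)
  intro x
  rcases le_total p x with hx | hx
  · exact right_ext_s2 hε0 hεT (cont hb) (cont hbt) (cont hs) (cont hst) hspos hstpos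
      (right_germ hb) (right_germ hbt) (right_germ hs) (right_germ hst) hu₁ hu₂ hut₁ hut₂ n1 n2 hp x hx
  · have gneg : ∀ {ψ : ℝ → ℝ}, ClassM ψ → ∀ x0, ∃ g : ℝ → ℝ, AnalyticAt ℝ g x0 ∧
        ∀ᶠ x in nhdsWithin x0 (Ici x0), -ψ (-x) = g x := by
      intro ψ hψ x0
      obtain ⟨g, hg, he⟩ := refl_germ (left_germ hψ) x0
      exact ⟨fun x => - g x, hg.neg, by filter_upwards [he] with x hx; rw [hx]⟩
    have r1 : (fun x : ℝ => (-1) * (fun x => x ^ 1) (-x)) = fun x : ℝ => x ^ 1 := by ext x; simp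
    have r2 : (fun x : ℝ => 1 * (fun x => x ^ 2) (-x)) = fun x : ℝ => x ^ 2 := by ext x; simp
    have tn : Tendsto (fun x : ℝ => -x) (nhds (-p)) (nhds p) := by
      simpa using continuous_neg.tendsto (-p)
    have key := right_ext_s2 (p := -p) (b := fun x => - b (-x)) (bt := fun x => - bt (-x))
      (σ := fun x => sigma (-x)) (σt := fun x => sigmat (-x)) hε0 hεT
      ((cont hb).comp continuous_neg).neg ((cont hbt).comp continuous_neg).neg
      ((cont hs).comp continuous_neg) ((cont hst).comp continuous_neg)
      (fun x => hspos _) (fun x => hstpos _) (gneg hb) (gneg hbt)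
      (refl_germ (left_germ hs)) (refl_germ (left_germ hst))
      (r1 ▸ refl_sol (-1) hu₁) (r2 ▸ refl_sol 1 hu₂) (r1 ▸ refl_sol (-1) hut₁) (r2 ▸ refl_sol 1 hut₂)
      (fun t ht => by filter_upwards [tn.eventually (n1 t ht)] with x hx; rw [hx])
      (fun t ht => by filter_upwards [tn.eventually (n2 t ht)] with x hx; rw [hx])
      (by simpa using hp) (-x) (by linarith)
    simpa using key
end
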